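/- arXiv:2509.03197 — 2 statements merged into one kernel-verified Lean document; each statement's English description precedes it below -/
import Mathlib

section
/- Let s ∈ ℂ with s not an odd positive integer, and let w ∈ ℂ with Re w > max(1, 3/2 − Re s). Then both series below converge absolutely and Σ_{d odd squarefree ≥ 1} L(s,χ_{8d})·d^{−w} = X_+(s) · Σ_{d odd squarefree ≥ 1} L(1−s,χ_{8d})·d^{−(s+w−1/2)}, where X_+(s) := (π/8)^{s−1/2}·Γ((1−s)/2)/Γ(s/2). -/
open Complex

noncomputable section

/-- `X₊(s) = (π/8)^{s-1/2} Γ((1-s)/2)/Γ(s/2)`. -/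
def Xplus (s : ℂ) : ℂ :=
  ((Real.pi : ℂ) / 8) ^ (s - 1 / 2) * Complex.Gamma ((1 - s) / 2) / Complex.Gamma (s / 2)

section
open Complex
open scoped Real
set_option autoImplicit false

theorem tsum_int_classes (f : ℤ → ℂ) (hf : Summable f) (M : ℕ) [NeZero M] :
    ∑' n, f n = ∑ r ∈ Finset.range M, ∑' m : ℤ, f (r + M * m) := by
  have e := (Int.divModEquiv M)
  have h1 := (Int.divModEquiv M).symm.tsum_eq f
  have h2 : Summable (fun p => f ((Int.divModEquiv M).symm p)) :=
    (Int.divModEquiv M).symm.summable_iff.mpr hf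
  rw [← h1, ← (Equiv.prodComm _ _).tsum_eq, Summable.tsum_prod, tsum_fintype, Finset.sum_range]
  · apply Finset.sum_congr rfl
    intro i _
    apply tsum_congr
    intro m
    congr 1
    simp [Int.divModEquiv]
    try ring
  · exact (Equiv.prodComm _ _).summable_iff.mpr h2

theorem summable_gauss {δ : ℂ} (hδ : 0 < δ.re) :
    Summable (fun n : ℤ => cexp (-π * δ * n ^ 2)) := by
  have h := (summable_jacobiTheta₂_term_iff 0 (I * δ)).mpr (by simpa using hδ)
  refine h.congr ?_
  intro n
  rw [jacobiTheta₂_term]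
  congr 1
  linear_combination (π * δ * n ^ 2 : ℂ) * I_sq

theorem poisson_class {δ : ℂ} (hδ : 0 < δ.re) (M : ℕ) (hM : 0 < M) (r : ℕ) :
    ∑' m : ℤ, cexp (-π * δ * ((r + M * m : ℤ) : ℂ) ^ 2) =
     1 / (M ^ 2 * δ) ^ (1 / 2 : ℂ) *
      ∑' k : ℤ, cexp (-π / (M ^ 2 * δ) * k ^ 2 + 2 * π * I * k * r / M) := by
  have hM' : (M : ℂ) ≠ 0 := by exact_mod_cast hM.ne'
  have hδ0 : δ ≠ 0 := by rintro rfl; simp at hδ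
  have ha : 0 < (M ^ 2 * δ : ℂ).re := by
    have : (M ^ 2 * δ : ℂ) = ((M ^ 2 : ℝ) : ℂ) * δ := by push_cast; ring
    rw [this, re_ofReal_mul]; positivity
  have := Complex.tsum_exp_neg_quadratic ha (-δ * r * M)
  have h1 : ∀ m : ℤ, cexp (-π * δ * ((r + M * m : ℤ) : ℂ) ^ 2) = cexp (-π * δ * r ^ 2) *
     cexp (-π * (M ^ 2 * δ) * m ^ 2 + 2 * π * (-δ * r * M) * m) := by
    intro m; rw [← Complex.exp_add]; congr 1; push_cast; ring
  simp_rw [h1]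
  rw [tsum_mul_left, this, mul_left_comm, ← tsum_mul_left]
  congr 1
  apply tsum_congr
  intro k
  rw [← Complex.exp_add]; congr 1
  field_simp
  linear_combination (-M^2 * δ * (r ^ 2*δ) : ℂ) * I_sq

open Filter Topology in
theorem theta_lim {l : Filter ℝ} (R : ℝ → ℂ) (hR : Tendsto (fun x => (R x).re) l atTop) (b : ℝ)
   [l.IsCountablyGenerated] :
    Tendsto (fun x => ∑' k : ℤ, cexp (-π * R x * k ^ 2 + 2 * π * I * k * b)) l (𝓝 1) := by
  have h1 : (1 : ℂ) = ∑' k : ℤ, if k = 0 then 1 else 0 := by simp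
  have hn : ∀ (x : ℝ) (k : ℤ), ‖cexp (-π * R x * k ^ 2 + 2 * π * I * k * b)‖ =
      Real.exp (-π * (R x).re * k ^ 2) := by
    intro x k
    rw [Complex.norm_exp]; congr 1
    have : (-π * R x * k ^ 2 + 2 * π * I * k * b : ℂ) = ((-π * k ^ 2 : ℝ) : ℂ) * R x + ((2 * π * k * b : ℝ) : ℂ) * I := by push_cast; ring
    rw [this, add_re, re_ofReal_mul, re_ofReal_mul]; simp; ring
  rw [h1]
  apply tendsto_tsum_of_dominated_convergence (bound := fun k : ℤ => Real.exp (-π * k ^ 2))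
  · have := (summable_gauss (δ := 1) (by simp)).norm
    refine this.congr ?_
    intro k; rw [Complex.norm_exp]; congr 1
    have : (-π * 1 * k ^ 2 : ℂ) = ((-π * k ^ 2 : ℝ) : ℂ) := by push_cast; ring
    rw [this, ofReal_re]
  · intro k
    by_cases hk : k = 0
    · simp [hk, tendsto_const_nhds]
    · rw [if_neg hk, tendsto_zero_iff_norm_tendsto_zero]
      simp_rw [hn]
      apply Real.tendsto_exp_atBot.comp
      have : 0 < Real.pi * k ^ 2 := by positivity
      have := (hR.const_mul_atTop this)
      rw [← tendsto_neg_atTop_iff]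
      refine this.congr (fun x => by ring)
  · filter_upwards [hR.eventually_ge_atTop 1] with x hx k
    rw [hn]
    apply Real.exp_le_exp.mpr
    have : 0 ≤ Real.pi * k ^ 2 * ((R x).re - 1) := by
      have : 0 ≤ (R x).re - 1 := by linarith
      positivity
    linarith

open Filter Topology in
theorem periodic_lim {l : Filter ℝ} [l.IsCountablyGenerated] (M : ℕ) (hM : 0 < M) (c : ℤ → ℂ)
    (hc : ∀ (r m : ℤ), c (r + M * m) = c r) (hc1 : ∀ n, ‖c n‖ ≤ 1)
    (δ : ℝ → ℂ) (h0 : ∀ᶠ x in l, 0 < (δ x).re)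
    (h1 : Tendsto (fun x => ((δ x)⁻¹).re) l atTop) :
    Tendsto (fun x => (M ^ 2 * δ x) ^ (1 / 2 : ℂ) * ∑' n : ℤ, c n * cexp (-π * δ x * n ^ 2)) l
      (𝓝 (∑ r ∈ Finset.range M, c r)) := by
  have : NeZero M := ⟨hM.ne'⟩
  have hM' : (M : ℂ) ≠ 0 := by exact_mod_cast hM.ne'
  have key : ∀ r ∈ Finset.range M, Tendsto (fun x => c r * ∑' k : ℤ, cexp (-π * (M ^ 2 * δ x)⁻¹ * k ^ 2 + 2 * π * I * k * ((r / M : ℝ) : ℂ))) l (𝓝 (c r * 1)) := by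
    intro r _
    apply Tendsto.const_mul
    apply theta_lim (fun x => (M ^ 2 * δ x)⁻¹)
    have : ∀ x, ((M ^ 2 * δ x)⁻¹ : ℂ).re = ((M : ℝ) ^ 2)⁻¹ * ((δ x)⁻¹).re := by
      intro x
      have : ((M ^ 2 * δ x)⁻¹ : ℂ) = ((((M : ℝ) ^ 2)⁻¹ : ℝ) : ℂ) * (δ x)⁻¹ := by
        push_cast; rw [mul_inv]
      rw [this, re_ofReal_mul]
    simp_rw [this]
    exact h1.const_mul_atTop (by positivity)
  have := tendsto_finsetSum _ key
  simp only [mul_one] at this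
  refine this.congr' ?_
  filter_upwards [h0] with x hx
  have hδ0 : δ x ≠ 0 := by intro h; simp [h] at hx
  have hs : Summable (fun n : ℤ => c n * cexp (-π * δ x * n ^ 2)) := by
    refine Summable.of_norm_bounded (summable_gauss hx).norm ?_
    intro n
    rw [norm_mul]
    exact mul_le_of_le_one_left (norm_nonneg _) (hc1 n)
  rw [tsum_int_classes _ hs M, Finset.mul_sum]
  apply Finset.sum_congr rfl
  intro r _
  simp_rw [hc]
  rw [tsum_mul_left, poisson_class hx M hM r, mul_left_comm]
  congr 1
  rw [← mul_assoc, mul_one_div_cancel, one_mul]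
  · apply tsum_congr; intro k; congr 1; push_cast; ring
  · simp [hM', hδ0, cpow_eq_zero_iff]

open Filter Topology in
theorem gauss_eval (N : ℕ) (hN : 0 < N) :
    ∑ r ∈ Finset.range N, cexp (2 * π * I * r ^ 2 / N) =
      √(N : ℝ) / (1 - I) * (1 + cexp (-π * I * N / 2)) := by
  have hN' : (N : ℂ) ≠ 0 := by exact_mod_cast hN.ne'
  have hNp : (0 : ℝ) < N := by exact_mod_cast hN
  set l : Filter ℝ := 𝓝[>] 0
  have hl : ∀ᶠ x in l, 0 < x := self_mem_nhdsWithin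
  -- left
  have L1 := periodic_lim (l := l) N hN (fun n => cexp (2 * π * I * n ^ 2 / N)) (by
    intro r m
    rw [Complex.exp_eq_exp_iff_exists_int]
    refine ⟨2 * r * m + N * m ^ 2, ?_⟩
    push_cast; field_simp; ring) (by
    intro n
    rw [Complex.norm_exp]
    have : (2 * π * I * n ^ 2 / N : ℂ) = ((2 * π * n ^ 2 / N : ℝ) : ℂ) * I := by push_cast; ring
    rw [this, re_ofReal_mul]; simp) (fun x => (x : ℂ)) (by simpa using hl) (by
    have : ∀ x : ℝ, ((x : ℂ)⁻¹).re = x⁻¹ := by intro x; rw [← ofReal_inv, ofReal_re]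
    simp_rw [this]
    exact tendsto_inv_nhdsGT_zero)
  have hz : ∀ x : ℝ, (1 + I * N * x / 2 : ℂ) ≠ 0 := by
    intro x h
    have := congrArg Complex.re h
    have h2 : (1 + I * N * x / 2 : ℂ) = 1 + ((N * x / 2 : ℝ) : ℂ) * I := by push_cast; ring
    rw [h2, add_re, re_ofReal_mul] at this
    simp at this
  have hinv : ∀ x : ℝ, ((((N : ℂ) ^ 2 / 4 * x / (1 + I * N * x / 2)))⁻¹).re = 4 / N ^ 2 * x⁻¹ := by
    intro x
    by_cases hx : x = 0
    · simp [hx]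
    have : ((((N : ℂ) ^ 2 / 4 * x / (1 + I * N * x / 2)))⁻¹) = ((4 / N ^ 2 * x⁻¹ : ℝ) : ℂ) + ((2 / N : ℝ) : ℂ) * I := by
      have := hz x
      have hx' : (x : ℂ) ≠ 0 := by exact_mod_cast hx
      push_cast
      field_simp
      ring
    rw [this, add_re, re_ofReal_mul, ofReal_re]; simp
  have hdre : ∀ᶠ x in l, 0 < (((N : ℂ) ^ 2 / 4 * x / (1 + I * N * x / 2))).re := by
    filter_upwards [hl] with x hx
    have h3 := hinv x
    rw [inv_re] at h3
    have h4 : 0 < 4 / (N : ℝ) ^ 2 * x⁻¹ := by positivity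
    rw [← h3] at h4
    by_contra h5
    push Not at h5
    have := div_nonpos_of_nonpos_of_nonneg h5 (normSq_nonneg (((N : ℂ) ^ 2 / 4 * x / (1 + I * N * x / 2))))
    linarith
  have L2 := periodic_lim (l := l) 2 (by norm_num) (fun n => cexp (-π * I * N * n ^ 2 / 2)) (by
    intro r m
    rw [Complex.exp_eq_exp_iff_exists_int]
    refine ⟨- N * (r * m + m ^ 2), ?_⟩
    push_cast; ring) (by
    intro n
    rw [Complex.norm_exp]
    have : (-π * I * N * n ^ 2 / 2 : ℂ) = ((-π * N * n ^ 2 / 2 : ℝ) : ℂ) * I := by push_cast; ring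
    rw [this, re_ofReal_mul]; simp) (fun x => ((N : ℂ) ^ 2 / 4 * x / (1 + I * N * x / 2))) hdre (by
    simp_rw [hinv]
    exact Tendsto.const_mul_atTop (by positivity) tendsto_inv_nhdsGT_zero)
  have hsl : (-2 * I / N : ℂ) ∈ slitPlane := by
    rw [mem_slitPlane_iff]; right
    have : (-2 * I / N : ℂ) = ((-2 / N : ℝ) : ℂ) * I := by push_cast; ring
    rw [this, im_ofReal_mul]; simp [hN.ne']
  have T1 : Tendsto (fun x : ℝ => ((x - 2 * I / N : ℂ) ^ (1 / 2 : ℂ))⁻¹ * ((1 + I * N * x / 2 : ℂ)⁻¹ ^ (1 / 2 : ℂ))⁻¹) l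
      (𝓝 (((-2 * I / N : ℂ) ^ (1 / 2 : ℂ))⁻¹ * 1)) := by
    apply Tendsto.mul
    · apply Tendsto.inv₀
      · apply Tendsto.cpow _ tendsto_const_nhds hsl
        have : Continuous (fun x : ℝ => (x - 2 * I / N : ℂ)) := by fun_prop
        have := this.tendsto 0
        simp only [ofReal_zero, zero_sub] at this
        rw [show (-2 * I / N : ℂ) = -(2 * I / N) by ring]
        exact this.mono_left nhdsWithin_le_nhds
      · have := slitPlane_ne_zero hsl
        simp [cpow_eq_zero_iff, hN']
    · have h1 : Tendsto (fun x : ℝ => (1 + I * N * x / 2 : ℂ)⁻¹) l (𝓝 1) := by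
        have : ContinuousAt (fun x : ℝ => (1 + I * N * x / 2 : ℂ)⁻¹) 0 := by
          exact ContinuousAt.inv₀ (f := fun x : ℝ => (1 + I * N * x / 2 : ℂ)) (by fun_prop) (hz 0)
        have := this.tendsto
        simp only [ofReal_zero, mul_zero, zero_div, add_zero, inv_one] at this
        exact this.mono_left nhdsWithin_le_nhds
      have h2 := (h1.cpow (tendsto_const_nhds (x := (1 / 2 : ℂ))) (by simp)).inv₀ (by simp)
      simpa using h2
  have T2 := T1.mul L2
  have T3 := tendsto_nhds_unique_of_eventuallyEq L1 T2 (by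
    filter_upwards [hl] with x hx
    have hx' : (x : ℂ) ≠ 0 := by exact_mod_cast hx.ne'
    have ha : 0 < (x - 2 * I / N : ℂ).re := by
      have : (x - 2 * I / N : ℂ) = x - ((2 / N : ℝ) : ℂ) * I := by push_cast; ring
      rw [this, sub_re, re_ofReal_mul]; simpa using hx
    have ha0 : (x - 2 * I / N : ℂ) ≠ 0 := by intro h; simp [h] at ha
    have hP := Complex.tsum_exp_neg_quadratic ha 0
    have e1 : ∑' n : ℤ, cexp (2 * π * I * n ^ 2 / N) * cexp (-π * x * n ^ 2) =
       ∑' n : ℤ, cexp (-π * (x - 2 * I / N : ℂ) * n ^ 2 + 2 * π * 0 * n) := by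
      apply tsum_congr; intro n; rw [← Complex.exp_add]; congr 1; ring
    have e2 : ∑' n : ℤ, cexp (-π * I * N * n ^ 2 / 2) * cexp (-π * ((N : ℂ) ^ 2 / 4 * x / (1 + I * N * x / 2)) * n ^ 2) =
       ∑' n : ℤ, cexp (-π / (x - 2 * I / N : ℂ) * (n + I * 0) ^ 2) := by
      apply tsum_congr; intro n; rw [← Complex.exp_add]; congr 1
      have h1 := hz x
      have : (x - 2 * I / N : ℂ) = -2 * I / N * (1 + I * N * x / 2) := by
        field_simp; linear_combination (x * N : ℂ) * I_sq
      rw [this]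
      have h2 : -π / (-2 * I / N * (1 + I * N * x / 2)) = (-π * I * N / 2) / (1 + I * N * x / 2) := by
        rw [div_eq_div_iff (by simp [hN', h1]) h1]
        field_simp
        linear_combination (-(2 + I * N * x) : ℂ) * I_sq
      rw [h2]
      have h3 : (-π * I * N / 2 : ℂ) = (-π * I * N / 2) / (1 + I * N * x / 2) + π * ((N : ℂ) ^ 2 / 4 * x / (1 + I * N * x / 2)) := by
        rw [← mul_div_assoc, ← add_div, eq_div_iff h1]
        linear_combination (-π * N ^ 2 * x / 4 : ℂ) * I_sq
      linear_combination (n ^ 2 : ℂ) * h3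
    rw [e1, hP, e2]
    have e3 : (((2 : ℕ) : ℂ) ^ 2 * ((N : ℂ) ^ 2 / 4 * x / (1 + I * N * x / 2))) ^ (1 / 2 : ℂ) =
       ((N : ℂ) ^ 2 * x) ^ (1 / 2 : ℂ) * ((1 + I * N * x / 2 : ℂ)⁻¹ ^ (1 / 2 : ℂ)) := by
      have : (((2 : ℕ) : ℂ) ^ 2 * ((N : ℂ) ^ 2 / 4 * x / (1 + I * N * x / 2))) = (((N : ℝ) ^ 2 * x : ℝ) : ℂ) * (1 + I * N * x / 2 : ℂ)⁻¹ := by push_cast; ring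
      have h0 : (N : ℝ) ^ 2 * x ≠ 0 := by positivity
      rw [this, cpow_def_of_ne_zero (mul_ne_zero (by exact_mod_cast h0) (inv_ne_zero (hz x))),
        log_ofReal_mul (by positivity) (inv_ne_zero (hz x)), add_mul, Complex.exp_add,
        cpow_def_of_ne_zero (inv_ne_zero (hz x)), cpow_def_of_ne_zero (by simp [hN', hx']), ofReal_log (by positivity)]
      push_cast; rfl
    rw [e3]
    have : ((1 + I * N * x / 2 : ℂ)⁻¹ ^ (1 / 2 : ℂ)) ≠ 0 := by
      simp [cpow_eq_zero_iff, hz x]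
    generalize ((1 + I * N * x / 2 : ℂ)⁻¹ ^ (1 / 2 : ℂ)) = A at *
    generalize ∑' n : ℤ, cexp (-π / (x - 2 * I / N : ℂ) * (n + I * 0) ^ 2) = B at *
    generalize (x - 2 * I / N : ℂ) ^ (1 / 2 : ℂ) = C at *
    generalize ((N : ℂ) ^ 2 * x) ^ (1 / 2 : ℂ) = D at *
    rw [one_div]
    calc D * (C⁻¹ * B) = C⁻¹ * (A⁻¹ * A) * (D * B) := by rw [inv_mul_cancel₀ this]; ring
      _ = _ := by ring)
  have hsq : (-2 * I / N : ℂ) ^ (1 / 2 : ℂ) = (1 - I) / √(N : ℝ) := by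
    have h1 : (-2 * I / N : ℂ) = ((1 - I) / √(N : ℝ)) ^ 2 := by
      rw [div_pow, ← ofReal_pow, Real.sq_sqrt hNp.le]
      push_cast
      congr 1
      linear_combination (-1 : ℂ) * I_sq
    rw [h1, one_div]
    apply Complex.sq_cpow_two_inv
    rw [div_ofReal_re]
    simp; positivity
  simp only [Int.cast_natCast] at T3
  rw [T3, hsq, Finset.sum_range_succ, Finset.sum_range_one]
  simp
end

section
open Complex
open scoped Real
set_option autoImplicit false

theorem sum_range_zmod (N : ℕ) [NeZero N] (F : ZMod N → ℂ) :
    ∑ n ∈ Finset.range N, F (n : ZMod N) = ∑ x : ZMod N, F x := by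
  refine Finset.sum_nbij' (fun n => (n : ZMod N)) ZMod.val ?_ ?_ ?_ ?_ ?_
  · simp
  · intro a _; simpa using ZMod.val_lt a
  · intro a ha; exact ZMod.val_cast_of_lt (by simpa using ha)
  · intro a _; simp
  · simp

def GaussProp (N : ℕ) (f : ℤ → ℂ) (c : ℂ) : Prop :=
  ∀ k : ℤ, ∑ n ∈ Finset.range N, f n * cexp (2 * π * I * n * k / N) = c * f k

theorem gauss_prime (p : ℕ) [Fact p.Prime] (hp : p ≠ 2) :
    GaussProp p (fun n => (jacobiSym n p : ℂ)) (√(p : ℝ) / (1 - I) * (1 + cexp (-π * I * p / 2))) := by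
  have hpp : p.Prime := Fact.out
  have hF : ringChar (ZMod p) ≠ 2 := by rwa [ZMod.ringChar_zmod_n]
  set χ : MulChar (ZMod p) ℂ := (quadraticChar (ZMod p)).ringHomComp (Int.castRingHom ℂ) with hχ
  have hχ1 : χ ≠ 1 := by
    rw [hχ, Ne, MulChar.ringHomComp_eq_one_iff (by exact Int.cast_injective)]
    exact quadraticChar_ne_one hF
  have hψ := ZMod.isPrimitive_stdAddChar p
  have hψ1 : ∑ a : ZMod p, ZMod.stdAddChar a = 0 := by
    apply AddChar.sum_eq_zero_of_ne_one
    intro h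
    have := hψ (one_ne_zero)
    apply this
    rw [h]; ext; simp
  have hval : gaussSum χ ZMod.stdAddChar = √(p : ℝ) / (1 - I) * (1 + cexp (-π * I * p / 2)) := by
    rw [← gauss_eval p hpp.pos]
    have h1 : ∀ r : ℕ, cexp (2 * π * I * r ^ 2 / p) = ZMod.stdAddChar ((r : ZMod p) ^ 2) := by
      intro r
      have := ZMod.stdAddChar_coe (N := p) ((r : ℤ) ^ 2)
      push_cast at this
      rw [this]
    simp_rw [h1]
    rw [sum_range_zmod p (fun x => ZMod.stdAddChar (x ^ 2))]
    have h2 : ∑ x : ZMod p, ZMod.stdAddChar (x ^ 2) = ∑ a : ZMod p, ∑ x ∈ Finset.univ.filter (fun x : ZMod p => x ^ 2 = a), (ZMod.stdAddChar (x ^ 2) : ℂ) := by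
      rw [Finset.sum_fiberwise]
    rw [h2, gaussSum]
    have h3 : ∀ a : ZMod p, ∑ x ∈ Finset.univ.filter (fun x : ZMod p => x ^ 2 = a), (ZMod.stdAddChar (x ^ 2) : ℂ) = χ a * ZMod.stdAddChar a + ZMod.stdAddChar a := by
      intro a
      rw [Finset.sum_congr rfl (g := fun _ => (ZMod.stdAddChar a : ℂ)) (by intro x hx; simp at hx; rw [hx])]
      rw [Finset.sum_const, nsmul_eq_mul]
      have := quadraticChar_card_sqrts hF a
      have h4 : (Finset.univ.filter (fun x : ZMod p => x ^ 2 = a)).card = {x : ZMod p | x ^ 2 = a}.toFinset.card := by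
        congr 1; ext; simp
      rw [h4]
      have h5 : (({x : ZMod p | x ^ 2 = a}.toFinset.card : ℤ) : ℂ) = ((quadraticChar (ZMod p) a + 1 : ℤ) : ℂ) := by rw [this]
      push_cast at h5
      rw [h5]
      simp [hχ]; ring
    simp_rw [h3]
    rw [Finset.sum_add_distrib, hψ1, add_zero]
  intro k
  have hJ : ∀ n : ℤ, (jacobiSym n p : ℂ) = χ (n : ZMod p) := by
    intro n
    rw [← jacobiSym.legendreSym.to_jacobiSym, legendreSym]
    simp [hχ]
  have hE : ∀ n : ℕ, cexp (2 * π * I * n * k / p) = ZMod.stdAddChar.mulShift (k : ZMod p) (n : ZMod p) := by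
    intro n
    have := ZMod.stdAddChar_coe (N := p) (k * n)
    push_cast at this
    rw [AddChar.mulShift_apply, this]
    congr 1; ring
  simp_rw [hJ, hE]
  have h6 := sum_range_zmod p (fun x => χ x * ZMod.stdAddChar.mulShift (k : ZMod p) x)
  simp only [Int.cast_natCast]
  rw [h6]
  change gaussSum χ _ = _
  by_cases hk : (k : ZMod p) = 0
  · rw [hk, AddChar.mulShift_zero, gaussSum_one_right hχ1, MulChar.map_zero, mul_zero]
  · obtain ⟨u, hu⟩ := (isUnit_iff_ne_zero.mpr hk)
    rw [← hu]
    have h7 := gaussSum_mulShift χ ZMod.stdAddChar u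
    rw [← hval, ← h7]
    have h8 : χ u * χ u = 1 := by
      rw [← map_mul, ← sq]
      have := quadraticChar_sq_one' (F := ZMod p) (a := u) u.ne_zero
      simp [hχ, this]
    linear_combination (-gaussSum χ (ZMod.stdAddChar.mulShift (u : ZMod p))) * h8
end

section
open Complex
open scoped Real
set_option autoImplicit false
noncomputable section

theorem crt_sum (a b : ℕ) (ha : 0 < a) (hb : 0 < b) (hab : a.Coprime b) (h : ℤ → ℂ)
    (hper : ∀ n m : ℤ, h (n + (a * b : ℕ) * m) = h n) :
    ∑ n ∈ Finset.range (a * b), h n = ∑ u ∈ Finset.range a, ∑ v ∈ Finset.range b, h (b * u + a * v) := by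
  rw [← Finset.sum_product']
  symm
  have hpos : 0 < a * b := by positivity
  have hmap : ∀ x ∈ Finset.range a ×ˢ Finset.range b, (b * x.1 + a * x.2) % (a * b) ∈ Finset.range (a * b) := by
    intro x _; simpa using Nat.mod_lt _ hpos
  have hinj : Set.InjOn (fun x : ℕ × ℕ => (b * x.1 + a * x.2) % (a * b)) (Finset.range a ×ˢ Finset.range b : Finset (ℕ × ℕ)) := by
    rintro ⟨u, v⟩ hu ⟨u', v'⟩ hu' heq
    simp only [Finset.coe_product, Set.mem_prod, Finset.mem_coe, Finset.mem_range] at hu hu'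
    have heq : (b * u + a * v) ≡ (b * u' + a * v') [MOD a * b] := heq
    have h1 : b * u ≡ b * u' [MOD a] := by
      have := heq.of_mul_right b
      have h3 : ∀ x y : ℕ, b * x + a * y ≡ b * x [MOD a] := fun x y => by
        simp [Nat.ModEq]
      exact ((h3 u v).symm.trans this).trans (h3 u' v')
    have h2 : a * v ≡ a * v' [MOD b] := by
      have := heq.of_mul_left a
      have h3 : ∀ x y : ℕ, b * x + a * y ≡ a * y [MOD b] := fun x y => by
        simp [Nat.ModEq]
      exact ((h3 u v).symm.trans this).trans (h3 u' v')
    have h1' := Nat.ModEq.cancel_left_of_coprime hab h1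
    have h2' := Nat.ModEq.cancel_left_of_coprime hab.symm h2
    have e1 := Nat.ModEq.eq_of_lt_of_lt h1' hu.1 hu'.1
    have e2 := Nat.ModEq.eq_of_lt_of_lt h2' hu.2 hu'.2
    simp [e1, e2]
  refine Finset.sum_nbij (fun x => (b * x.1 + a * x.2) % (a * b)) hmap hinj ?_ ?_
  · exact Finset.surjOn_of_injOn_of_card_le _ hmap hinj (by simp)
  · rintro ⟨u, v⟩ _
    have h1 := hper (((b * u + a * v) % (a * b) : ℕ) : ℤ) (((b * u + a * v) / (a * b) : ℕ) : ℤ)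
    rw [← h1]
    congr 1
    have := Nat.mod_add_div (b * u + a * v) (a * b)
    exact_mod_cast this.symm

theorem cexp_int_per (x : ℂ) (m : ℤ) : cexp (x + 2 * π * I * m) = cexp x := by
  rw [show x + 2 * π * I * m = x + m * (2 * π * I) by ring]
  exact Complex.exp_periodic.int_mul m x

theorem gauss_crt (a b : ℕ) (ha : 0 < a) (hb : 0 < b) (hab : a.Coprime b) (f g : ℤ → ℂ) (cf cg : ℂ)
    (hf : ∀ n m : ℤ, f (n + a * m) = f n) (hg : ∀ n m : ℤ, g (n + b * m) = g n)
    (hfm : ∀ n m, f (n * m) = f n * f m) (hgm : ∀ n m, g (n * m) = g n * g m)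
    (Gf : GaussProp a f cf) (Gg : GaussProp b g cg) :
    GaussProp (a * b) (fun n => f n * g n) (f b * g a * cf * cg) := by
  intro k
  have ha' : (a : ℂ) ≠ 0 := by exact_mod_cast ha.ne'
  have hb' : (b : ℂ) ≠ 0 := by exact_mod_cast hb.ne'
  have := crt_sum a b ha hb hab (fun n : ℤ => f n * g n * cexp (2 * π * I * n * k / (a * b : ℕ))) ?_
  · simp only [Int.cast_natCast] at this
    rw [this]
    have e1 : ∀ u v : ℕ, f (b * u + a * v) * g (b * u + a * v) * cexp (2 * π * I * ((b * u + a * v : ℤ) : ℂ) * k / (a * b : ℕ)) =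
      f b * g a * ((f u * cexp (2 * π * I * u * k / a)) * (g v * cexp (2 * π * I * v * k / b))) := by
      intro u v
      rw [hf, add_comm ((b : ℤ) * u), hg, hfm, hgm]
      have : cexp (2 * π * I * ((a * v + b * u : ℤ) : ℂ) * k / (a * b : ℕ)) = cexp (2 * π * I * u * k / a) * cexp (2 * π * I * v * k / b) := by
        rw [← Complex.exp_add]; congr 1; push_cast; field_simp; ring
      rw [this]; ring
    simp_rw [e1, ← Finset.mul_sum, ← Finset.sum_mul]
    rw [Gf k, Gg k]; ring
  · intro n m
    have h1 : f (n + (a * b : ℕ) * m) = f n := by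
      rw [← hf n (b * m)]; congr 1; push_cast; ring
    have h2 : g (n + (a * b : ℕ) * m) = g n := by
      rw [← hg n (a * m)]; congr 1; push_cast; ring
    simp only [h1, h2]
    congr 1
    rw [← cexp_int_per (2 * π * I * n * k / (a * b : ℕ)) (m * k)]
    congr 1; push_cast; field_simp

theorem jac_per (k : ℕ) (n m : ℤ) : (jacobiSym (n + k * m) k : ℂ) = jacobiSym n k := by
  rw [jacobiSym.mod_left (n + k * m), jacobiSym.mod_left n]; simp

def epsK (k : ℕ) : ℂ := if k % 4 = 1 then 1 else I

theorem eps_val (p : ℕ) (hp : Odd p) : (1 + cexp (-π * I * p / 2)) / (1 - I) = epsK p := by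
  have h1 : (1 - I : ℂ) ≠ 0 := by
    intro h; have := congrArg Complex.re h; simp at this
  have hI : I * I = -1 := I_mul_I
  have h4 := Nat.div_add_mod p 4
  set q := p / 4
  have hexp : cexp (-π * I * p / 2) = cexp (-π * I * (p % 4 : ℕ) / 2) := by
    rw [← cexp_int_per (-π * I * (p % 4 : ℕ) / 2) (-q)]
    congr 1
    rw [← h4]; push_cast; 
    have : (4 * q + p % 4) % 4 = p % 4 := by omega
    rw [this]; ring
  have : p % 4 = 1 ∨ p % 4 = 3 := by
    rw [Nat.odd_iff] at hp; omega
  rw [hexp, epsK]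
  rcases this with h | h <;> rw [h]
  · have : cexp (-π * I * (1 : ℕ) / 2) = -I := by
      rw [show (-π * I * (1 : ℕ) / 2 : ℂ) = -(π / 2 * I) by push_cast; ring, Complex.exp_neg, Complex.exp_pi_div_two_mul_I]; simp
    rw [this]; field_simp; simp; ring
  · have : cexp (-π * I * (3 : ℕ) / 2) = I := by
      rw [← cexp_int_per _ 1]
      rw [show (-π * I * (3 : ℕ) / 2 + 2 * π * I * (1 : ℤ) : ℂ) = (π / 2 * I) by push_cast; ring, Complex.exp_pi_div_two_mul_I]
    rw [this]; field_simp; simp; linear_combination hI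

theorem gauss_jac (k : ℕ) : Odd k → Squarefree k → GaussProp k (fun n => (jacobiSym n k : ℂ)) (epsK k * √(k : ℝ)) := by
  induction k using induction_on_primes with
  | zero => intro h; simp at h
  | one => 
    intro _ _ k
    simp [epsK]
  | prime_mul p a hp ih =>
    intro ho hsq
    have hop : Odd p := (Nat.odd_mul.1 ho).1
    have hoa : Odd a := (Nat.odd_mul.1 ho).2
    obtain ⟨hc, _, hsa⟩ := (Nat.squarefree_mul_iff).1 hsq
    have := Fact.mk hp
    have hp2 : p ≠ 2 := by rintro rfl; revert hop; decide
    have h1 := gauss_prime p hp2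
    have h2 := ih hoa hsa
    have h3 := gauss_crt p a hp.pos hoa.pos hc _ _ _ _ (jac_per p) (jac_per a) (by intro n m; simp [jacobiSym.mul_left]) (by intro n m; simp [jacobiSym.mul_left]) h1 h2
    have hev := eps_val p hop
    have hne : NeZero a := ⟨hoa.pos.ne'⟩
    have hfun : (fun n : ℤ => (jacobiSym n (p * a) : ℂ)) = fun n : ℤ => (jacobiSym n p : ℂ) * (jacobiSym n a : ℂ) := by
      ext n; rw [jacobiSym.mul_right]; push_cast; rfl
    rw [hfun]
    convert h3 using 1
    have hrec : (jacobiSym a p : ℂ) * (jacobiSym p a : ℂ) * (epsK p * epsK a) = epsK (p * a) := by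
      have hs : (jacobiSym p a : ℂ) * jacobiSym p a = 1 := by
        have := jacobiSym.sq_one (a := p) (b := a) (by simpa using hc)
        rw [sq] at this; exact_mod_cast this
      have hp4 : p % 4 = 1 ∨ p % 4 = 3 := by rw [Nat.odd_iff] at hop; omega
      have ha4 : a % 4 = 1 ∨ a % 4 = 3 := by rw [Nat.odd_iff] at hoa; omega
      have hm : (p * a) % 4 = ((p % 4) * (a % 4)) % 4 := Nat.mul_mod _ _ _
      rcases hp4 with h | h
      · rw [← jacobiSym.quadratic_reciprocity_one_mod_four h hoa, hs]
        rcases ha4 with h' | h' <;> simp [epsK, hm, h, h']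
      · rcases ha4 with h' | h'
        · rw [jacobiSym.quadratic_reciprocity_one_mod_four h' hop, hs]
          simp [epsK, hm, h, h']
        · rw [jacobiSym.quadratic_reciprocity_three_mod_four h' h]
          push_cast
          rw [neg_mul, hs]
          simp [epsK, hm, h, h']
    rw [← hrec, ← hev]
    push_cast
    rw [Real.sqrt_mul (by positivity)]
    push_cast; ring

def zeta8 : ℂ := (√(2 : ℝ) : ℂ) / 2 * (1 + I)

theorem zeta8_exp : cexp (2 * π * I / 8) = zeta8 := by
  rw [show (2 * π * I / 8 : ℂ) = ((π / 4 : ℝ) : ℂ) * I by push_cast; ring, Complex.exp_mul_I,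
    ← Complex.ofReal_cos, ← Complex.ofReal_sin, Real.cos_pi_div_four, Real.sin_pi_div_four, zeta8]
  push_cast; ring

theorem sqrt2_sq : (√(2 : ℝ) : ℂ) ^ 2 = 2 := by
  have : (√(2 : ℝ)) ^ 2 = 2 := Real.sq_sqrt (by norm_num)
  exact_mod_cast this

theorem zeta8_sq : zeta8 ^ 2 = I := by
  rw [zeta8]; linear_combination (1 + I) ^ 2 / 4 * sqrt2_sq + 1 / 2 * I_sq

theorem exp8 (n k : ℕ) : cexp (2 * π * I * n * k / 8) = zeta8 ^ ((n * k) % 8) := by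
  have h8 : zeta8 ^ 8 = 1 := by
    rw [show (8 : ℕ) = 2 * 4 by norm_num, pow_mul, zeta8_sq, I_pow_four]
  have : zeta8 ^ (n * k) = zeta8 ^ ((n * k) % 8) := by
    conv_lhs => rw [← Nat.div_add_mod (n * k) 8, pow_add, pow_mul, h8, one_pow, one_mul]
  rw [← this, ← zeta8_exp, ← Complex.exp_nat_mul]
  congr 1; push_cast; ring

theorem zeta8_pows : zeta8 ^ 3 = I * zeta8 ∧ zeta8 ^ 4 = -1 ∧ zeta8 ^ 5 = - zeta8 ∧ zeta8 ^ 6 = - I ∧ zeta8 ^ 7 = - I * zeta8 := by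
  have h4 : zeta8 ^ 4 = -1 := by rw [show (4 : ℕ) = 2 * 2 by norm_num, pow_mul, zeta8_sq, I_sq]
  have h3 : zeta8 ^ 3 = I * zeta8 := by rw [pow_succ, zeta8_sq]
  refine ⟨h3, h4, ?_, ?_, ?_⟩
  · rw [pow_succ, h4]; ring
  · rw [show (6 : ℕ) = 4 + 2 by norm_num, pow_add, h4, zeta8_sq]; ring
  · rw [show (7 : ℕ) = 4 + 3 by norm_num, pow_add, h4, h3]; ring

theorem sqrt8 : (√(8 : ℝ) : ℂ) = 2 * √(2 : ℝ) := by
  rw [show (8 : ℝ) = 2 ^ 2 * 2 by norm_num, Real.sqrt_mul (by norm_num), Real.sqrt_sq (by norm_num)]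
  push_cast; ring

theorem gauss8_red (f : ZMod 8 → ℤ) (c : ℂ) (h : ∀ k ∈ Finset.range 8, ∑ n ∈ Finset.range 8, (f (n : ZMod 8) : ℂ) * zeta8 ^ ((n * k) % 8) = c * f (k : ZMod 8)) :
    GaussProp 8 (fun n => (f (n : ZMod 8) : ℂ)) c := by
  intro k
  obtain ⟨r, hr, m, rfl⟩ : ∃ r : ℕ, r < 8 ∧ ∃ m : ℤ, k = r + 8 * m := by
    refine ⟨(k % 8).toNat, by omega, k / 8, by omega⟩
  have h1 := h r (by simpa using hr)
  have e : (((r + 8 * m : ℤ)) : ZMod 8) = (r : ZMod 8) := by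
    push_cast; rw [show (8 : ZMod 8) = 0 from rfl]; ring
  beta_reduce
  rw [e, ← h1]
  refine Finset.sum_congr rfl fun n _ => ?_
  rw [← exp8]
  rw [Int.cast_natCast]
  congr 1
  · rw [← cexp_int_per (2 * π * I * n * r / 8) (n * m)]
    congr 1; push_cast; ring

theorem gauss_chi8 : GaussProp 8 (fun n => (ZMod.χ₈ (n : ZMod 8) : ℂ)) (√(8 : ℝ)) := by
  apply gauss8_red
  obtain ⟨h3, h4, h5, h6, h7⟩ := zeta8_pows
  have v0 : ZMod.χ₈ ((0 : ℕ) : ZMod 8) = 0 := by decide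
  have v1 : ZMod.χ₈ ((1 : ℕ) : ZMod 8) = 1 := by decide
  have v2 : ZMod.χ₈ ((2 : ℕ) : ZMod 8) = 0 := by decide
  have v3 : ZMod.χ₈ ((3 : ℕ) : ZMod 8) = -1 := by decide
  have v4 : ZMod.χ₈ ((4 : ℕ) : ZMod 8) = 0 := by decide
  have v5 : ZMod.χ₈ ((5 : ℕ) : ZMod 8) = -1 := by decide
  have v6 : ZMod.χ₈ ((6 : ℕ) : ZMod 8) = 0 := by decide
  have v7 : ZMod.χ₈ ((7 : ℕ) : ZMod 8) = 1 := by decide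
  have key : zeta8 * (1 - I) = √(2 : ℝ) := by
    rw [zeta8]; linear_combination -(√(2 : ℝ) : ℂ) / 2 * I_sq
  intro k hk
  have hk : k < 8 := by simpa using hk
  simp only [Finset.sum_range_succ, Finset.sum_range_zero, v0, v1, v2, v3, v4, v5, v6, v7, sqrt8]
  interval_cases k <;> simp only [v0, v1, v2, v3, v4, v5, v6, v7] <;> norm_num [h3, h4, h5, h6, h7, zeta8_sq] <;> first | linear_combination 2 * key | linear_combination (-2) * key

theorem gauss_chi8' : GaussProp 8 (fun n => (ZMod.χ₈' (n : ZMod 8) : ℂ)) (I * √(8 : ℝ)) := by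
  apply gauss8_red
  obtain ⟨h3, h4, h5, h6, h7⟩ := zeta8_pows
  have v0 : ZMod.χ₈' ((0 : ℕ) : ZMod 8) = 0 := by decide
  have v1 : ZMod.χ₈' ((1 : ℕ) : ZMod 8) = 1 := by decide
  have v2 : ZMod.χ₈' ((2 : ℕ) : ZMod 8) = 0 := by decide
  have v3 : ZMod.χ₈' ((3 : ℕ) : ZMod 8) = 1 := by decide
  have v4 : ZMod.χ₈' ((4 : ℕ) : ZMod 8) = 0 := by decide
  have v5 : ZMod.χ₈' ((5 : ℕ) : ZMod 8) = -1 := by decide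
  have v6 : ZMod.χ₈' ((6 : ℕ) : ZMod 8) = 0 := by decide
  have v7 : ZMod.χ₈' ((7 : ℕ) : ZMod 8) = -1 := by decide
  have key : zeta8 * (1 + I) = I * √(2 : ℝ) := by
    rw [zeta8]; linear_combination (√(2 : ℝ) : ℂ) / 2 * I_sq
  intro k hk
  have hk : k < 8 := by simpa using hk
  simp only [Finset.sum_range_succ, Finset.sum_range_zero, v0, v1, v2, v3, v4, v5, v6, v7, sqrt8]
  interval_cases k <;> simp only [v0, v1, v2, v3, v4, v5, v6, v7] <;> norm_num [h3, h4, h5, h6, h7, zeta8_sq] <;> first | linear_combination 2 * key | linear_combination (-2) * key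


/-- the real character attached to `8d`, as a function on the integers -/
def FD (d : ℕ) (n : ℤ) : ℂ :=
  (if d % 4 = 1 then (ZMod.χ₈ (n : ZMod 8) : ℂ) else (ZMod.χ₈' (n : ZMod 8) : ℂ)) * (jacobiSym n d : ℂ)

theorem jac8 (n : ℕ) (hn : Odd n) : jacobiSym 8 n = ZMod.χ₈ (n : ZMod 8) := by
  rw [show (8 : ℤ) = 2 * 2 * 2 by norm_num, jacobiSym.mul_left, jacobiSym.mul_left, jacobiSym.at_two hn]
  have : ∀ x : ZMod 8, ZMod.χ₈ x * ZMod.χ₈ x * ZMod.χ₈ x = ZMod.χ₈ x := by decide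
  exact this _

theorem FD_odd (d n : ℕ) (hd : Odd d) (hn : Odd n) : FD d n = (jacobiSym (8 * d) n : ℂ) := by
  rw [jacobiSym.mul_left, jac8 n hn, FD]
  have hd4 : d % 4 = 1 ∨ d % 4 = 3 := by rw [Nat.odd_iff] at hd; omega
  have hn4 : n % 4 = 1 ∨ n % 4 = 3 := by rw [Nat.odd_iff] at hn; omega
  have h8 : ((n : ZMod 8)) = ((n % 8 : ℕ) : ZMod 8) := by simp
  rcases hd4 with h | h
  · rw [jacobiSym.quadratic_reciprocity_one_mod_four h hn]
    simp [h]
  · rcases hn4 with h' | h'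
    · rw [jacobiSym.quadratic_reciprocity_one_mod_four' hd h']
      have : n % 8 = 1 ∨ n % 8 = 5 := by omega
      have e : ZMod.χ₈' (n : ZMod 8) = ZMod.χ₈ (n : ZMod 8) := by
        rw [h8]; rcases this with h | h <;> rw [h] <;> decide
      simp [h, e]
    · rw [jacobiSym.quadratic_reciprocity_three_mod_four h h']
      have : n % 8 = 3 ∨ n % 8 = 7 := by omega
      have e : ZMod.χ₈' (n : ZMod 8) = - ZMod.χ₈ (n : ZMod 8) := by
        rw [h8]; rcases this with h | h <;> rw [h] <;> decide
      simp [h, e]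

theorem FD_even (d n : ℕ) (hn : Even n) : FD d n = 0 := by
  have h8 : ((n : ZMod 8)) = ((n % 8 : ℕ) : ZMod 8) := by simp
  have : n % 8 = 0 ∨ n % 8 = 2 ∨ n % 8 = 4 ∨ n % 8 = 6 := by rw [Nat.even_iff] at hn; omega
  have e : ZMod.χ₈' (n : ZMod 8) = 0 ∧ ZMod.χ₈ (n : ZMod 8) = 0 := by
    rw [h8]; rcases this with h | h | h | h <;> rw [h] <;> decide
  rw [FD]
  simp [e]

theorem FD_per (d : ℕ) (n m : ℤ) : FD d (n + (8 * d : ℕ) * m) = FD d n := by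
  rw [FD, FD]
  congr 1
  · have : (((n + (8 * d : ℕ) * m : ℤ)) : ZMod 8) = (n : ZMod 8) := by
      push_cast; rw [show (8 : ZMod 8) = 0 from rfl]; ring
    rw [this]
  · rw [← jac_per d n (8 * m)]; congr 2; push_cast; ring

theorem FD_gauss (d : ℕ) (hd : Odd d) (hsq : Squarefree d) : GaussProp (8 * d) (FD d) (√((8 * d : ℕ) : ℝ)) := by
  have hc : Nat.Coprime 8 d := by
    have : Nat.Coprime 2 d := by simpa using hd
    simpa using Nat.Coprime.pow_left 3 this
  have hd4 : d % 4 = 1 ∨ d % 4 = 3 := by rw [Nat.odd_iff] at hd; omega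
  have h8 : ((d : ZMod 8)) = ((d % 8 : ℕ) : ZMod 8) := by simp
  have hs : (√((8 * d : ℕ) : ℝ) : ℂ) = √(8 : ℝ) * √(d : ℝ) := by
    push_cast; rw [Real.sqrt_mul (by norm_num)]; push_cast; rfl
  have per : ∀ (f : ZMod 8 → ℤ) (n m : ℤ), (fun n : ℤ => (f (n : ZMod 8) : ℂ)) (n + (8 : ℕ) * m) = (fun n : ℤ => (f (n : ZMod 8) : ℂ)) n := by
    intro f n m
    have : (((n + (8 : ℕ) * m : ℤ)) : ZMod 8) = (n : ZMod 8) := by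
      push_cast; rw [show (8 : ZMod 8) = 0 from rfl]; ring
    simp only [this]
  rcases hd4 with h | h
  · have h3 := gauss_crt 8 d (by norm_num) hd.pos hc _ _ _ _ (per ZMod.χ₈) (jac_per d) (by intro n m; rw [Int.cast_mul, map_mul, Int.cast_mul]) (by intro n m; simp [jacobiSym.mul_left]) gauss_chi8 (gauss_jac d hd hsq)
    have e : FD d = fun n : ℤ => (ZMod.χ₈ (n : ZMod 8) : ℂ) * (jacobiSym n d : ℂ) := by
      ext n; simp [FD, h]
    rw [e, hs]
    convert h3 using 1
    have j8 := jac8 d hd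
    push_cast
    rw [j8]
    have : d % 8 = 1 ∨ d % 8 = 5 := by omega
    rw [h8]; rcases this with h' | h' <;> rw [h']
    · have : ZMod.χ₈ ((1 : ℕ) : ZMod 8) = 1 := by decide
      rw [this]; simp [epsK, h]
    · have : ZMod.χ₈ ((5 : ℕ) : ZMod 8) = -1 := by decide
      rw [this]; simp [epsK, h]
  · have h3 := gauss_crt 8 d (by norm_num) hd.pos hc _ _ _ _ (per ZMod.χ₈') (jac_per d) (by intro n m; rw [Int.cast_mul, map_mul, Int.cast_mul]) (by intro n m; simp [jacobiSym.mul_left]) gauss_chi8' (gauss_jac d hd hsq)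
    have e : FD d = fun n : ℤ => (ZMod.χ₈' (n : ZMod 8) : ℂ) * (jacobiSym n d : ℂ) := by
      ext n; simp [FD, h]
    rw [e, hs]
    convert h3 using 1
    have j8 := jac8 d hd
    push_cast
    rw [j8]
    have : d % 8 = 3 ∨ d % 8 = 7 := by omega
    rw [h8]; rcases this with h' | h' <;> rw [h']
    · have : ZMod.χ₈ ((3 : ℕ) : ZMod 8) = -1 ∧ ZMod.χ₈' ((3 : ℕ) : ZMod 8) = 1 := by decide
      rw [this.1, this.2]; simp [epsK, h]; linear_combination (√8 * √d : ℂ) * I_sq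
    · have : ZMod.χ₈ ((7 : ℕ) : ZMod 8) = 1 ∧ ZMod.χ₈' ((7 : ℕ) : ZMod 8) = -1 := by decide
      rw [this.1, this.2]; simp [epsK, h]; linear_combination (√8 * √d : ℂ) * I_sq
end
end

section
open Complex
open scoped Real
set_option autoImplicit false
noncomputable section

theorem sin_lower (x : ℝ) (h0 : 0 ≤ x) (h1 : x ≤ 1) : 2 * x * (1 - x) ≤ Real.sin (π * x) := by
  rcases le_total x (1 / 2) with h | h
  · have := Real.mul_le_sin (x := π * x) (by positivity) (by nlinarith [Real.pi_pos])
    have e : 2 / π * (π * x) = 2 * x := by field_simp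
    rw [e] at this
    nlinarith
  · have := Real.mul_le_sin (x := π * (1 - x)) (by have := Real.pi_pos; have : 0 ≤ 1 - x := by linarith
                                                   positivity) (by nlinarith [Real.pi_pos])
    have e : 2 / π * (π * (1 - x)) = 2 * (1 - x) := by field_simp
    rw [e, show π * (1 - x) = π - π * x by ring, Real.sin_pi_sub] at this
    nlinarith

theorem norm_exp_sub_one (x : ℝ) : ‖cexp (2 * π * I * x) - 1‖ = 2 * |Real.sin (π * x)| := by
  have := Complex.norm_exp_I_mul_ofReal_sub_one (2 * π * x)
  rw [show (I * ((2 * π * x : ℝ) : ℂ)) = 2 * π * I * x by push_cast; ring] at this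
  rw [this, show 2 * π * x / 2 = π * x by ring]
  simp

theorem geom_bound (k a Y : ℕ) (ha : 0 < a) (hak : a < k) :
    ‖∑ n ∈ Finset.range Y, cexp (2 * π * I * n * a / k)‖ ≤ (k / a + k / (k - a : ℝ)) / 2 := by
  have hk : (0 : ℝ) < k := by exact_mod_cast (by omega : 0 < k)
  have ha' : (0 : ℝ) < a := by exact_mod_cast ha
  have hak' : (a : ℝ) < k := by exact_mod_cast hak
  set x : ℝ := a / k with hx
  have hx0 : 0 < x := by positivity
  have hx1 : x < 1 := by rw [hx, div_lt_one hk]; exact hak'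
  have hs := sin_lower x hx0.le hx1.le
  have hn := norm_exp_sub_one x
  set z := cexp (2 * π * I * x) with hz
  have hpos : 0 < 2 * x * (1 - x) := by have : 0 < 1 - x := by linarith
                                        positivity
  have hlow : 4 * x * (1 - x) ≤ ‖z - 1‖ := by
    rw [hn]; have := le_abs_self (Real.sin (π * x)); linarith
  have hz1 : z ≠ 1 := by
    intro h; rw [h] at hlow; simp at hlow; nlinarith
  have e : ∀ n : ℕ, cexp (2 * π * I * n * a / k) = z ^ n := by
    intro n
    rw [hz, ← Complex.exp_nat_mul]; congr 1; rw [hx]; push_cast; ring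
  simp_rw [e]
  rw [geom_sum_eq hz1, norm_div]
  have hzn : ‖z‖ = 1 := by
    rw [hz, show (2 * π * I * x : ℂ) = ((2 * π * x : ℝ) : ℂ) * I by push_cast; ring]; exact Complex.norm_exp_ofReal_mul_I _
  have h2 : ‖z ^ Y - 1‖ ≤ 2 := by
    refine (norm_sub_le _ _).trans ?_
    rw [norm_pow, hzn]; norm_num
  have : ‖z ^ Y - 1‖ / ‖z - 1‖ ≤ 2 / (4 * x * (1 - x)) := by
    gcongr
  refine this.trans (le_of_eq ?_)
  rw [hx]
  have h3 : (k : ℝ) - a ≠ 0 := by linarith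
  field_simp
  ring

theorem polya (k : ℕ) (hk : Odd k) (hsq : Squarefree k) (hk1 : k ≠ 1) (Y : ℕ) :
    |((∑ n ∈ Finset.range Y, jacobiSym n k : ℤ) : ℝ)| ≤ √k * (1 + Real.log k) := by
  have hk0 : 0 < k := hk.pos
  have hk2 : 1 < k := by omega
  have hkr : (0 : ℝ) < k := by exact_mod_cast hk0
  have G := gauss_jac k hk hsq
  have heps : ‖epsK k‖ = 1 := by rw [epsK]; split_ifs <;> simp
  have hc : ‖epsK k * (√(k : ℝ) : ℂ)‖ = √k := by
    rw [norm_mul, heps, one_mul, Complex.norm_real, Real.norm_of_nonneg (Real.sqrt_nonneg _)]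
  have key : epsK k * (√(k : ℝ) : ℂ) * ((∑ n ∈ Finset.range Y, jacobiSym n k : ℤ) : ℂ) =
      ∑ a ∈ Finset.range k, (jacobiSym a k : ℂ) * ∑ n ∈ Finset.range Y, cexp (2 * π * I * n * a / k) := by
    push_cast
    simp_rw [Finset.mul_sum]
    rw [Finset.sum_comm]
    refine Finset.sum_congr rfl fun n _ => ?_
    have := G n
    simp only [Int.cast_natCast] at this
    rw [← this]
    refine Finset.sum_congr rfl fun a _ => ?_
    congr 2; ring
  have hj : ∀ a : ℕ, ‖(jacobiSym a k : ℂ)‖ ≤ 1 := by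
    intro a
    rcases jacobiSym.trichotomy (a : ℤ) k with h | h | h <;> rw [h] <;> simp
  have hb : ‖∑ a ∈ Finset.range k, (jacobiSym a k : ℂ) * ∑ n ∈ Finset.range Y, cexp (2 * π * I * n * a / k)‖ ≤ k * (1 + Real.log k) := by
    obtain ⟨m, rfl⟩ : ∃ m, k = m + 1 := ⟨k - 1, by omega⟩
    rw [Finset.sum_range_succ']
    have h0 : jacobiSym ((0 : ℕ) : ℤ) (m + 1) = 0 := by
      have := jacobiSym.zero_left hk2
      simpa using this
    rw [h0]; simp only [Int.cast_zero, zero_mul, add_zero]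
    refine (norm_sum_le _ _).trans ?_
    have h1 : ∀ a ∈ Finset.range m, ‖(jacobiSym ((a + 1 : ℕ) : ℤ) (m + 1) : ℂ) * ∑ n ∈ Finset.range Y, cexp (2 * π * I * n * (a + 1 : ℕ) / (m + 1 : ℕ))‖ ≤
       ((m + 1 : ℕ) / 2 : ℝ) * (1 / (a + 1 : ℝ) + 1 / ((m - 1 - a : ℕ) + 1 : ℝ)) := by
      intro a ha
      have ha : a < m := by simpa using ha
      rw [norm_mul]
      have h2 := geom_bound (m + 1) (a + 1) Y (by omega) (by omega)
      have h3 : ((m - 1 - a : ℕ) : ℝ) + 1 = ((m + 1 : ℕ) : ℝ) - ((a + 1 : ℕ) : ℝ) := by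
        have : m - 1 - a + 1 + (a + 1) = m + 1 := by omega
        have : ((m - 1 - a : ℕ) : ℝ) + 1 + ((a + 1 : ℕ) : ℝ) = ((m + 1 : ℕ) : ℝ) := by exact_mod_cast this
        linarith
      rw [h3]
      refine (mul_le_of_le_one_left (norm_nonneg _) (hj _)).trans (h2.trans (le_of_eq ?_))
      push_cast; ring
    refine (Finset.sum_le_sum h1).trans ?_
    rw [← Finset.mul_sum, Finset.sum_add_distrib, Finset.sum_range_reflect (fun i => 1 / ((i : ℝ) + 1)) m]
    have h4 : ∑ x ∈ Finset.range m, 1 / ((x : ℝ) + 1) ≤ 1 + Real.log (m + 1 : ℕ) := by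
      have := harmonic_le_one_add_log m
      have e : ((harmonic m : ℚ) : ℝ) = ∑ x ∈ Finset.range m, 1 / ((x : ℝ) + 1) := by
        rw [harmonic]; push_cast; simp
      rw [e] at this
      refine this.trans ?_
      have : Real.log m ≤ Real.log (m + 1 : ℕ) := by
        apply Real.log_le_log
        · exact_mod_cast (by omega : 0 < m)
        · push_cast; linarith
      linarith
    nlinarith
  rw [← key, norm_mul, hc] at hb
  have hs : √(k : ℝ) * √k = k := Real.mul_self_sqrt hkr.le
  have hsp : 0 < √(k : ℝ) := Real.sqrt_pos.2 hkr
  have hn : ‖((∑ n ∈ Finset.range Y, jacobiSym n k : ℤ) : ℂ)‖ = |((∑ n ∈ Finset.range Y, jacobiSym n k : ℤ) : ℝ)| := by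
    rw [Complex.norm_intCast]
  rw [hn] at hb
  have : √(k : ℝ) * |((∑ n ∈ Finset.range Y, jacobiSym n k : ℤ) : ℝ)| ≤ √k * (√k * (1 + Real.log k)) := by
    rw [← mul_assoc, hs]; exact hb
  exact le_of_mul_le_mul_left this hsp

end
end

section
open Complex
open scoped Real
set_option autoImplicit false
noncomputable section

theorem sum_moebius_gcd (d L : ℕ) (hL : L ≠ 0) :
    ∑ e ∈ L.divisors with e ∣ d, ArithmeticFunction.moebius e = if Nat.Coprime d L then 1 else 0 := by
  have h1 : L.divisors.filter (fun e => e ∣ d) = (Nat.gcd d L).divisors := by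
    ext e
    simp only [Finset.mem_filter, Nat.mem_divisors, Nat.dvd_gcd_iff]
    have : Nat.gcd d L ≠ 0 := Nat.gcd_ne_zero_right hL
    tauto
  rw [h1]
  have := congrArg (fun f => f (Nat.gcd d L)) ArithmeticFunction.coe_zeta_mul_moebius
  simp only [ArithmeticFunction.coe_zeta_mul_apply] at this
  rw [this, ArithmeticFunction.one_apply]

theorem jac_sq_mul (d l k : ℕ) (hl : l ≠ 0) (hk : k ≠ 0) :
    jacobiSym d (l ^ 2 * k) = if Nat.Coprime d l then jacobiSym d k else 0 := by
  rw [jacobiSym.mul_right' _ (by positivity) hk, jacobiSym.pow_right]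
  split_ifs with h
  · rw [jacobiSym.sq_one (by simpa using h), one_mul]
  · rw [jacobiSym.eq_zero_iff.2 ⟨hl, by simpa using h⟩]; simp

theorem sum_mult (e Y : ℕ) (he : 0 < e) (f : ℕ → ℤ) :
    ∑ d ∈ Finset.range Y with e ∣ d, f d = ∑ d ∈ Finset.range ((Y + e - 1) / e), f (e * d) := by
  symm
  refine Finset.sum_nbij (fun d => e * d) ?_ ?_ ?_ ?_
  · intro d hd
    simp only [Finset.mem_range, Finset.mem_filter] at hd ⊢
    refine ⟨?_, dvd_mul_right _ _⟩
    rw [Nat.lt_iff_add_one_le, Nat.le_div_iff_mul_le he, add_mul, mul_comm d e] at hd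
    omega
  · intro a _ b _ h
    exact Nat.eq_of_mul_eq_mul_left he h
  · intro d hd
    simp only [Finset.mem_range, Finset.coe_filter, Set.mem_ofPred_eq] at hd
    obtain ⟨hd, c, rfl⟩ := hd
    refine ⟨c, ?_, rfl⟩
    simp only [Finset.coe_range, Set.mem_Iio]
    rw [Nat.lt_iff_add_one_le, Nat.le_div_iff_mul_le he, add_mul, mul_comm c e]
    omega
  · simp

theorem jac_sum_nonsq (n : ℕ) (hn : Odd n) (hns : ¬ IsSquare n) (Y : ℕ) :
    |((∑ d ∈ Finset.range Y with Odd d, jacobiSym d n : ℤ) : ℝ)| ≤ 2 * √n * (1 + Real.log n) := by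
  obtain ⟨k, l, hk, hl, hkl, hsq⟩ := Nat.sq_mul_squarefree_of_pos hn.pos
  subst hkl
  have hko : Odd k := (Nat.odd_mul.1 hn).2
  have hlo : Odd l := by
    have := (Nat.odd_mul.1 hn).1
    exact (Nat.odd_pow_iff (by norm_num)).1 this
  have hk1 : k ≠ 1 := by
    rintro rfl; apply hns; exact ⟨l, by ring⟩
  have h1 : ∑ d ∈ Finset.range Y with Odd d, jacobiSym d (l ^ 2 * k) =
      ∑ e ∈ (2 * l).divisors, ArithmeticFunction.moebius e * jacobiSym e k * ∑ d ∈ Finset.range ((Y + e - 1) / e), jacobiSym d k := by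
    have : ∀ e ∈ (2 * l).divisors, ArithmeticFunction.moebius e * jacobiSym e k * ∑ d ∈ Finset.range ((Y + e - 1) / e), jacobiSym d k =
       ∑ d ∈ Finset.range Y, if e ∣ d then ArithmeticFunction.moebius e * jacobiSym d k else 0 := by
      intro e he
      have he0 : 0 < e := Nat.pos_of_mem_divisors he
      rw [← Finset.sum_filter, sum_mult e Y he0 (fun d => ArithmeticFunction.moebius e * jacobiSym d k), Finset.mul_sum]
      refine Finset.sum_congr rfl fun d _ => ?_
      push_cast; rw [jacobiSym.mul_left]; ring
    rw [Finset.sum_congr rfl this, Finset.sum_comm, Finset.sum_filter]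
    refine Finset.sum_congr rfl fun d _ => ?_
    rw [← Finset.sum_filter, ← Finset.sum_mul, sum_moebius_gcd d (2 * l) (by positivity), jac_sq_mul d l k hl.ne' hk.ne']
    have : Nat.Coprime d (2 * l) ↔ Odd d ∧ Nat.Coprime d l := by
      rw [Nat.coprime_mul_iff_right, Nat.coprime_two_right]
    by_cases h1 : Odd d <;> by_cases h2 : Nat.Coprime d l <;> simp [this, h1, h2]
  rw [h1]
  push_cast
  refine (Finset.abs_sum_le_sum_abs _ _).trans ?_
  have h2 : ∀ e ∈ (2 * l).divisors, |(ArithmeticFunction.moebius e : ℝ) * (jacobiSym e k : ℝ) * ∑ d ∈ Finset.range ((Y + e - 1) / e), (jacobiSym d k : ℝ)| ≤ √k * (1 + Real.log k) := by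
    intro e _
    have p := polya k hko hsq hk1 ((Y + e - 1) / e)
    push_cast at p
    rw [abs_mul, abs_mul]
    have m1 : |(ArithmeticFunction.moebius e : ℝ)| ≤ 1 := by
      exact_mod_cast ArithmeticFunction.abs_moebius_le_one (n := e)
    have m2 : |(jacobiSym e k : ℝ)| ≤ 1 := by
      rcases jacobiSym.trichotomy (e : ℤ) k with h | h | h <;> rw [h] <;> simp
    refine (mul_le_of_le_one_left (abs_nonneg _) ?_).trans p
    exact mul_le_one₀ m1 (abs_nonneg _) m2
  refine (Finset.sum_le_sum h2).trans ?_
  rw [Finset.sum_const, nsmul_eq_mul]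
  have h3 : ((2 * l).divisors.card : ℝ) ≤ 2 * l := by
    exact_mod_cast Nat.card_divisors_le_self (2 * l)
  have hk1' : (1 : ℝ) ≤ k := by exact_mod_cast hk
  have hl1' : (1 : ℝ) ≤ l := by exact_mod_cast hl
  have hlog : Real.log k ≤ Real.log (l ^ 2 * k) := by
    apply Real.log_le_log (by positivity)
    nlinarith [one_le_pow₀ hl1' (n := 2)]
  have hlk : 0 ≤ Real.log k := Real.log_nonneg hk1'
  have hs : √((l : ℝ) ^ 2 * k) = l * √k := by
    rw [Real.sqrt_mul (by positivity), Real.sqrt_sq (by positivity)]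
  rw [hs]
  calc _ ≤ 2 * (l : ℝ) * (√k * (1 + Real.log (l ^ 2 * k))) := by gcongr
    _ = _ := by ring

theorem jac_sum_bound (ε : ℝ) (hε : 0 < ε) (n : ℕ) (hn : Odd n) (hns : ¬ IsSquare n) (Y : ℕ) :
    |((∑ d ∈ Finset.range Y with Odd d, jacobiSym (8 * d) n : ℤ) : ℝ)| ≤ 2 * (1 + 1 / ε) * (n : ℝ) ^ (1 / 2 + ε) := by
  have h := jac_sum_nonsq n hn hns Y
  have hn1 : (1 : ℝ) ≤ n := by exact_mod_cast hn.pos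
  have e : ∑ d ∈ Finset.range Y with Odd d, jacobiSym (8 * d) n = jacobiSym 8 n * ∑ d ∈ Finset.range Y with Odd d, jacobiSym d n := by
    rw [Finset.mul_sum]
    refine Finset.sum_congr rfl fun d _ => jacobiSym.mul_left _ _ _
  rw [e]; push_cast at h ⊢
  rw [abs_mul]
  have m2 : |(jacobiSym 8 n : ℝ)| ≤ 1 := by
    rcases jacobiSym.trichotomy (8 : ℤ) n with h | h | h <;> rw [h] <;> simp
  refine (mul_le_of_le_one_left (abs_nonneg _) m2).trans (h.trans ?_)
  rw [Real.rpow_add (by linarith), ← Real.sqrt_eq_rpow]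
  have h1 : Real.log n ≤ (n : ℝ) ^ ε / ε := Real.log_le_rpow_div (by linarith) hε
  have h2 : 1 ≤ (n : ℝ) ^ ε := Real.one_le_rpow hn1 hε.le
  have h3 : 1 + Real.log n ≤ (1 + 1 / ε) * (n : ℝ) ^ ε := by
    have : (1 + 1 / ε) * (n : ℝ) ^ ε = (n : ℝ) ^ ε + (n : ℝ) ^ ε / ε := by ring
    linarith
  calc 2 * √(n : ℝ) * (1 + Real.log n) ≤ 2 * √(n : ℝ) * ((1 + 1 / ε) * (n : ℝ) ^ ε) := by gcongr
    _ = _ := by ring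
end
end

section
open Complex
open scoped Real
set_option autoImplicit false
noncomputable section

def jf (d n : ℕ) : ℝ := if Odd n then (jacobiSym (8 * d) n : ℝ) else 0

def th (d : ℕ) (x : ℝ) : ℝ := ∑' n : ℕ, jf d n * Real.exp (-π * n ^ 2 * x / (8 * d))

theorem jf_abs (d n : ℕ) : |jf d n| ≤ 1 := by
  rw [jf]; split_ifs
  · rcases jacobiSym.trichotomy (8 * d : ℤ) n with h | h | h <;> rw [h] <;> simp
  · simp

theorem summable_exp_nat (c : ℝ) (hc : 0 < c) : Summable (fun n : ℕ => Real.exp (-π * n ^ 2 * c)) := by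
  have := (summable_gauss (δ := (c : ℂ)) (by simpa using hc)).norm
  have h2 := this.comp_injective (Nat.cast_injective (R := ℤ))
  refine h2.congr fun n => ?_
  simp only [Function.comp, Complex.norm_exp]
  congr 1
  have : (-π * c * ((n : ℤ) : ℂ) ^ 2 : ℂ) = ((-π * n ^ 2 * c : ℝ) : ℂ) := by push_cast; ring
  rw [this, Complex.ofReal_re]

theorem summable_th (d : ℕ) (hd : 0 < d) (x : ℝ) (hx : 0 < x) :
    Summable (fun n : ℕ => ‖jf d n * Real.exp (-π * n ^ 2 * x / (8 * d))‖) := by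
  have hd' : (0 : ℝ) < d := by exact_mod_cast hd
  have h := summable_exp_nat (x / (8 * d)) (by positivity)
  refine Summable.of_nonneg_of_le (fun _ => norm_nonneg _) (fun n => ?_) h
  rw [norm_mul, Real.norm_eq_abs, Real.norm_of_nonneg (Real.exp_pos _).le]
  rw [show -π * n ^ 2 * x / (8 * d) = -π * n ^ 2 * (x / (8 * d)) by ring]
  exact mul_le_of_le_one_left (Real.exp_pos _).le (jf_abs d n)

theorem abel_bound (a w : ℕ → ℝ) (S : ℝ) (N : ℕ) (hS : ∀ Y ≤ N + 1, |∑ d ∈ Finset.range Y, a d| ≤ S)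
    (hw0 : 0 ≤ w 0) (hw : ∀ i < N, w i ≤ w (i + 1)) :
    |∑ d ∈ Finset.range (N + 1), a d * w d| ≤ 2 * S * w N := by
  have hS0 : 0 ≤ S := (abs_nonneg _).trans (hS 0 (by omega))
  have h := Finset.sum_range_by_parts w a (N + 1)
  simp only [smul_eq_mul, Nat.add_sub_cancel] at h
  have e : ∑ d ∈ Finset.range (N + 1), a d * w d = ∑ d ∈ Finset.range (N + 1), w d * a d := by
    simp_rw [mul_comm]
  rw [e, h]
  have hwN : 0 ≤ w N := by
    have : ∀ i ≤ N, 0 ≤ w i := by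
      intro i; induction i with
      | zero => intro _; exact hw0
      | succ i ih => intro hi; exact (ih (by omega)).trans (hw i (by omega))
    exact this N le_rfl
  have h1 : |w N * ∑ i ∈ Finset.range (N + 1), a i| ≤ w N * S := by
    rw [abs_mul, abs_of_nonneg hwN]; gcongr; exact hS _ le_rfl
  have h2 : |∑ i ∈ Finset.range N, (w (i + 1) - w i) * ∑ i ∈ Finset.range (i + 1), a i| ≤ S * (w N - w 0) := by
    refine (Finset.abs_sum_le_sum_abs _ _).trans ?_
    rw [← Finset.sum_range_sub, Finset.mul_sum]
    refine Finset.sum_le_sum fun i hi => ?_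
    have hi : i < N := by simpa using hi
    have := hw i hi
    rw [abs_mul, abs_of_nonneg (by linarith), mul_comm]
    have := hS (i + 1) (by omega)
    exact mul_le_mul_of_nonneg_right this (by linarith)
  refine (abs_sub _ _).trans ?_
  nlinarith

theorem exp_le_rpow (A : ℝ) (hA : 0 < A) (y : ℝ) (hy : 0 < y) : Real.exp (-y) ≤ A ^ A * y ^ (-A) := by
  have h1 : y / A ≤ Real.exp (y / A) := by have := Real.add_one_le_exp (y / A); linarith
  have h2 : (y / A) ^ A ≤ Real.exp (y / A) ^ A := Real.rpow_le_rpow (by positivity) h1 hA.le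
  rw [← Real.exp_mul, div_mul_cancel₀ _ hA.ne', Real.div_rpow hy.le hA.le] at h2
  rw [Real.exp_neg, Real.rpow_neg hy.le]
  have hA' : 0 < A ^ A := by positivity
  have hy' : 0 < y ^ A := by positivity
  rw [← div_eq_mul_inv]
  rw [inv_le_comm₀ (Real.exp_pos _) (by positivity), inv_div]
  exact h2

theorem summable_square_pairs (A : ℝ) (hA : 1 / 2 < A) :
    Summable (fun p : ℕ × ℕ => if IsSquare (p.1 * p.2) then ((p.1 * p.2 : ℕ) : ℝ) ^ (-A) else 0) := by
  have hs1 : Summable (fun n : ℕ => (n : ℝ) ^ (-(2 * A))) := by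
    rw [Real.summable_nat_rpow]; linarith
  have hs2 : Summable (fun p : ℕ × ℕ => (p.1 : ℝ) ^ (-(2 * A)) * (p.2 : ℝ) ^ (-(2 * A))) :=
    hs1.mul_of_nonneg hs1 (fun _ => by positivity) (fun _ => by positivity)
  have hs3 : Summable (fun p : ℕ × (ℕ × ℕ) => (p.1 : ℝ) ^ (-(2 * A)) * ((p.2.1 : ℝ) ^ (-(2 * A)) * (p.2.2 : ℝ) ^ (-(2 * A)))) :=
    hs1.mul_of_nonneg hs2 (fun _ => by positivity) (fun _ => by dsimp only [Pi.zero_apply]; positivity)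
  set S : Set (ℕ × ℕ) := {p | IsSquare (p.1 * p.2) ∧ 0 < p.1 ∧ 0 < p.2} with hS
  have hex : ∀ p : S, ∃ t : ℕ × (ℕ × ℕ), p.1 = (t.1 * t.2.1 ^ 2, t.1 * t.2.2 ^ 2) := by
    rintro ⟨⟨n, m⟩, ⟨c, hc⟩, hn, hm⟩
    simp only at hc hn hm ⊢
    obtain ⟨u, v, huv, hu, hv⟩ := Nat.exists_coprime n m
    set g := Nat.gcd n m with hg
    have hg0 : 0 < g := Nat.gcd_pos_of_pos_left _ hn
    have hgc : g ^ 2 ∣ c ^ 2 := ⟨u * v, by rw [sq c, ← hc]; calc n * m = (u * g) * (v * g) := by rw [← hu, ← hv]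
      _ = _ := by ring⟩
    rw [Nat.pow_dvd_pow_iff (by norm_num)] at hgc
    obtain ⟨c', rfl⟩ := hgc
    have huvc : u * v = c' ^ 2 := by
      have : g ^ 2 * (u * v) = g ^ 2 * c' ^ 2 := by
        calc g ^ 2 * (u * v) = (u * g) * (v * g) := by ring
          _ = n * m := by rw [← hu, ← hv]
          _ = _ := by rw [hc]; ring
      exact Nat.eq_of_mul_eq_mul_left (by positivity) this
    obtain ⟨a, ha⟩ := exists_eq_pow_of_mul_eq_pow (show IsUnit (gcd u v) from Nat.isUnit_iff.2 huv) huvc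
    obtain ⟨b, hb⟩ := exists_eq_pow_of_mul_eq_pow (show IsUnit (gcd v u) from Nat.isUnit_iff.2 huv.symm) ((mul_comm v u).trans huvc)
    refine ⟨(g, a, b), ?_⟩
    simp only [Prod.mk.injEq]
    rw [← ha, ← hb, mul_comm g, mul_comm g]
    exact ⟨hu, hv⟩
  choose ψ hψ using hex
  have hinj : Function.Injective ψ := by
    intro p q h
    apply Subtype.ext
    rw [hψ p, hψ q, h]
  have h1 := hs3.comp_injective hinj
  have h2 : Summable (Set.indicator S (fun p : ℕ × ℕ => ((p.1 * p.2 : ℕ) : ℝ) ^ (-A))) := by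
    rw [← summable_subtype_iff_indicator]
    refine h1.congr fun p => ?_
    simp only [Function.comp]
    conv_rhs => rw [hψ p]
    set t := ψ p
    push_cast
    rw [← Real.mul_rpow (by positivity) (by positivity), ← Real.mul_rpow (by positivity) (by positivity)]
    rw [show -(2 * A) = (2 : ℕ) * (-A) by push_cast; ring, Real.rpow_natCast_mul (by positivity)]
    congr 1; ring
  refine h2.congr fun p => ?_
  rw [Set.indicator_apply]
  by_cases hsq : IsSquare (p.1 * p.2)
  · by_cases h : 0 < p.1 ∧ 0 < p.2
    · rw [if_pos (show p ∈ S from ⟨hsq, h⟩), if_pos hsq]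
    · rw [if_neg (fun h' : p ∈ S => h h'.2), if_pos hsq]
      have : p.1 * p.2 = 0 := by
        rw [not_and_or] at h
        rcases h with h | h <;> simp at h <;> simp [h]
      rw [this]; simp [Real.zero_rpow (show -A ≠ 0 by linarith)]
  · rw [if_neg (fun h' : p ∈ S => hsq h'.1), if_neg hsq]
end
end

section
open Complex
open scoped Real
set_option autoImplicit false
noncomputable section

theorem jf_mul (d n m : ℕ) : jf d n * jf d m = if Odd n ∧ Odd m then (jacobiSym (8 * d) (n * m) : ℝ) else 0 := by
  rw [jf, jf]
  by_cases h1 : Odd n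
  · by_cases h2 : Odd m
    · simp only [h1, h2, if_true, and_self]
      rw [jacobiSym.mul_right' _ h1.pos.ne' h2.pos.ne']; push_cast; rfl
    · simp [h1, h2]
  · simp [h1]

/-- the weight -/
def wt (c : ℝ) (d : ℕ) : ℝ := if d = 0 then 0 else Real.exp (-(c / d))

theorem wt_mono (c : ℝ) (hc : 0 ≤ c) (i : ℕ) : wt c i ≤ wt c (i + 1) := by
  rw [wt, wt]
  rcases Nat.eq_zero_or_pos i with h | h
  · subst h; simp [Real.exp_pos, (Real.exp_pos _).le]
  · have h' : (0 : ℝ) < i := by exact_mod_cast h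
    rw [if_neg h.ne', if_neg (by omega)]
    apply Real.exp_le_exp.2
    apply neg_le_neg
    push_cast
    gcongr; linarith

theorem pair_bound (ε : ℝ) (hε : 0 < ε) (X : ℕ) (hX : 1 ≤ X) (c : ℝ) (hc : 0 ≤ c) (n m : ℕ) (hn : Odd n) (hm : Odd m) :
    |∑ d ∈ Finset.range (X + 1) with Odd d, (jacobiSym (8 * d) (n * m) : ℝ) * Real.exp (-(c / d))| ≤
      (if IsSquare (n * m) then 4 * (X : ℝ) else 4 * (1 + 1 / ε) * ((n * m : ℕ) : ℝ) ^ (1 / 2 + ε)) * Real.exp (-(c / X)) := by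
  have e : ∑ d ∈ Finset.range (X + 1) with Odd d, (jacobiSym (8 * d) (n * m) : ℝ) * Real.exp (-(c / d)) =
      ∑ d ∈ Finset.range (X + 1), (if Odd d then (jacobiSym (8 * d) (n * m) : ℝ) else 0) * wt c d := by
    rw [Finset.sum_filter]
    refine Finset.sum_congr rfl fun d _ => ?_
    by_cases h : Odd d
    · simp [h, wt, h.pos.ne']
    · simp [h]
  rw [e]
  have hwX : wt c X = Real.exp (-(c / X)) := by rw [wt, if_neg (by omega)]
  rw [← hwX]
  have hw0 : 0 ≤ wt c X := by rw [hwX]; positivity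
  have hX1 : (1 : ℝ) ≤ X := by exact_mod_cast hX
  split_ifs with hsq
  · have h := abel_bound (fun d => if Odd d then (jacobiSym (8 * d) (n * m) : ℝ) else 0) (wt c) (X + 1) X ?_ (by simp [wt]) (fun i _ => wt_mono c hc i)
    · refine h.trans ?_
      apply mul_le_mul_of_nonneg_right _ hw0
      linarith
    · intro Y hY
      refine (Finset.abs_sum_le_sum_abs _ _).trans ?_
      have : ∀ d ∈ Finset.range Y, |(if Odd d then (jacobiSym (8 * d) (n * m) : ℝ) else 0)| ≤ 1 := by
        intro d _
        split_ifs
        · rcases jacobiSym.trichotomy (8 * d : ℤ) (n * m) with h | h | h <;> rw [h] <;> simp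
        · simp
      refine (Finset.sum_le_sum this).trans ?_
      simp only [Finset.sum_const, Finset.card_range, nsmul_eq_mul, mul_one]
      exact_mod_cast hY
  · have h := abel_bound (fun d => if Odd d then (jacobiSym (8 * d) (n * m) : ℝ) else 0) (wt c) (2 * (1 + 1 / ε) * ((n * m : ℕ) : ℝ) ^ (1 / 2 + ε)) X ?_ (by simp [wt]) (fun i _ => wt_mono c hc i)
    · refine h.trans (le_of_eq ?_)
      ring
    · intro Y hY
      have := jac_sum_bound ε hε (n * m) (hn.mul hm) hsq Y
      rw [← Finset.sum_filter]
      exact_mod_cast this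

theorem mean_sq (A : ℝ) (hA : 1 / 2 < A) : ∃ C : ℝ, 0 < C ∧ ∀ X : ℕ, 1 ≤ X → ∀ x : ℝ, 1 ≤ x →
    ∑ d ∈ Finset.range (X + 1) with Odd d, th d x ^ 2 ≤ C * (X : ℝ) ^ (1 + A) * x ^ (-A) := by
  set ε : ℝ := (A - 1 / 2) / 2 with hε
  have hε0 : 0 < ε := by rw [hε]; linarith
  set h : ℕ × ℕ → ℝ := fun p => (if IsSquare (p.1 * p.2) then ((p.1 * p.2 : ℕ) : ℝ) ^ (-A) else 0) + ((p.1 * p.2 : ℕ) : ℝ) ^ (-(1 + ε)) with hh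
  have hs2 : Summable (fun p : ℕ × ℕ => ((p.1 * p.2 : ℕ) : ℝ) ^ (-(1 + ε))) := by
    have hs1 : Summable (fun n : ℕ => (n : ℝ) ^ (-(1 + ε))) := by
      rw [Real.summable_nat_rpow]; linarith
    refine (hs1.mul_of_nonneg hs1 (fun _ => by positivity) (fun _ => by positivity)).congr fun p => ?_
    push_cast; rw [Real.mul_rpow (by positivity) (by positivity)]
  have hsum : Summable h := (summable_square_pairs A hA).add hs2
  have hh0 : ∀ p, 0 ≤ h p := by
    intro p; rw [hh]; dsimp only; split_ifs <;> positivity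
  -- constants
  set K1 : ℝ := 4 * (A ^ A * (π / 4) ^ (-A)) with hK1
  set K2 : ℝ := 4 * (1 + 1 / ε) * ((1 + A) ^ (1 + A) * (π / 4) ^ (-(1 + A))) with hK2
  have hA0 : 0 < A := by linarith
  have hK10 : 0 < K1 := by positivity
  have hK20 : 0 < K2 := by positivity
  refine ⟨(K1 + K2) * ∑' p, h p + 1, by have := hsum.hasSum.nonneg hh0; positivity, ?_⟩
  intro X hX x hx
  have hX1 : (1 : ℝ) ≤ X := by exact_mod_cast hX
  have hX0 : (0 : ℝ) < X := by linarith
  have hx0 : 0 < x := by linarith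
  set T : ℕ → ℕ × ℕ → ℝ := fun d p => (jf d p.1 * Real.exp (-π * p.1 ^ 2 * x / (8 * d))) * (jf d p.2 * Real.exp (-π * p.2 ^ 2 * x / (8 * d))) with hT
  have hTs : ∀ d ∈ (Finset.range (X + 1)).filter Odd, HasSum (T d) (th d x ^ 2) := by
    intro d hd
    have hd0 : 0 < d := (Finset.mem_filter.1 hd).2.pos
    have hs := summable_th d hd0 x hx0
    have h1 := tsum_mul_tsum_of_summable_norm hs hs
    have h2 := summable_mul_of_summable_norm hs hs
    rw [sq, th, h1]
    exact h2.hasSum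
  have hTsum := hasSum_sum hTs
  have hbound : ∀ p, ∑ d ∈ Finset.range (X + 1) with Odd d, T d p ≤ ((K1 + K2) * ((X : ℝ) ^ (1 + A) * x ^ (-A))) * h p := by
    rintro ⟨n, m⟩
    by_cases hodd : Odd n ∧ Odd m
    · obtain ⟨hn, hm⟩ := hodd
      set c : ℝ := π * (n ^ 2 + m ^ 2) * x / 8 with hc
      have hc0 : 0 ≤ c := by positivity
      have e1 : ∀ d, T d (n, m) = (jacobiSym (8 * d) (n * m) : ℝ) * Real.exp (-(c / d)) := by
        intro d
        rw [hT]; dsimp only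
        have : Real.exp (-(c / d)) = Real.exp (-π * n ^ 2 * x / (8 * d)) * Real.exp (-π * m ^ 2 * x / (8 * d)) := by
          rw [← Real.exp_add]; congr 1; rw [hc]; ring
        rw [this]
        have j := jf_mul d n m
        rw [if_pos ⟨hn, hm⟩] at j
        rw [← j]; ring
      simp_rw [e1]
      refine (le_abs_self _).trans ((pair_bound ε hε0 X hX c hc0 n m hn hm).trans ?_)
      set M : ℝ := ((n * m : ℕ) : ℝ) with hM
      have hM1 : 1 ≤ M := by rw [hM]; exact_mod_cast (hn.mul hm).pos
      have hM0 : 0 < M := by linarith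
      have hexp : Real.exp (-(c / X)) ≤ Real.exp (-(π / 4 * (M * (x / X)))) := by
        apply Real.exp_le_exp.2
        apply neg_le_neg
        rw [hc, hM]; push_cast
        rw [show π / 4 * (n * m * (x / X)) = (π * x / (8 * X)) * (2 * n * m) by field_simp; ring,
          show π * (n ^ 2 + m ^ 2) * x / 8 / X = (π * x / (8 * X)) * (n ^ 2 + m ^ 2) by field_simp]
        apply mul_le_mul_of_nonneg_left _ (by positivity)
        nlinarith [sq_nonneg ((n : ℝ) - m)]
      have hy : 0 < π / 4 * (M * (x / X)) := by positivity
      have gen : ∀ B : ℝ, (π / 4 * (M * (x / X))) ^ (-B) = (π / 4) ^ (-B) * M ^ (-B) * ((X : ℝ) ^ B * x ^ (-B)) := by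
        intro B
        rw [Real.mul_rpow (by positivity) (by positivity), Real.mul_rpow (by positivity) (by positivity), Real.div_rpow (x := x) (by positivity) (by positivity),
          Real.rpow_neg hX0.le B]
        field_simp
      have hr2 : 0 ≤ M ^ (-(1 + ε)) := by positivity
      have hZ : 0 < (X : ℝ) ^ (1 + A) * x ^ (-A) := by positivity
      split_ifs with hsq
      · have h1 := hexp.trans (exp_le_rpow A hA0 _ hy)
        rw [gen] at h1
        have hhp : h (n, m) = M ^ (-A) + M ^ (-(1 + ε)) := by rw [hh]; dsimp only; rw [if_pos hsq]
        calc 4 * (X : ℝ) * Real.exp (-(c / X)) ≤ 4 * X * (A ^ A * ((π / 4) ^ (-A) * M ^ (-A) * ((X : ℝ) ^ A * x ^ (-A)))) := by gcongr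
          _ = (K1 * ((X : ℝ) ^ (1 + A) * x ^ (-A))) * M ^ (-A) := by
            rw [hK1, Real.rpow_add hX0, Real.rpow_one]; ring
          _ ≤ _ := by
            rw [hhp]
            gcongr
            · linarith
            · linarith
      · have h1 := hexp.trans (exp_le_rpow (1 + A) (by linarith) _ hy)
        rw [gen] at h1
        have hhp : h (n, m) = M ^ (-(1 + ε)) := by rw [hh]; dsimp only; rw [if_neg hsq, zero_add]
        have hMM : M ^ (1 / 2 + ε) * M ^ (-(1 + A)) = M ^ (-(1 + ε)) := by
          rw [← Real.rpow_add hM0]; congr 1; rw [hε]; ring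
        have hxx : x ^ (-(1 + A)) ≤ x ^ (-A) := Real.rpow_le_rpow_of_exponent_le hx (by linarith)
        calc 4 * (1 + 1 / ε) * M ^ (1 / 2 + ε) * Real.exp (-(c / X)) ≤ 4 * (1 + 1 / ε) * M ^ (1 / 2 + ε) * ((1 + A) ^ (1 + A) * ((π / 4) ^ (-(1 + A)) * M ^ (-(1 + A)) * ((X : ℝ) ^ (1 + A) * x ^ (-(1 + A))))) := by gcongr
          _ = K2 * ((X : ℝ) ^ (1 + A) * x ^ (-(1 + A))) * (M ^ (1 / 2 + ε) * M ^ (-(1 + A))) := by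
            rw [hK2]; ring
          _ ≤ (K1 + K2) * ((X : ℝ) ^ (1 + A) * x ^ (-A)) * h (n, m) := by
            rw [hhp, hMM]
            gcongr
            linarith
    · have : ∑ d ∈ Finset.range (X + 1) with Odd d, T d (n, m) = 0 := by
        refine Finset.sum_eq_zero fun d _ => ?_
        rw [hT]; dsimp only
        have j := jf_mul d n m
        rw [if_neg hodd] at j
        linear_combination Real.exp (-π * n ^ 2 * x / (8 * d)) * Real.exp (-π * m ^ 2 * x / (8 * d)) * j
      rw [this]
      have := hh0 (n, m)
      positivity
  have hfin := hasSum_le hbound hTsum (hsum.hasSum.mul_left ((K1 + K2) * ((X : ℝ) ^ (1 + A) * x ^ (-A))))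
  refine hfin.trans ?_
  have hZ : 0 < (X : ℝ) ^ (1 + A) * x ^ (-A) := by positivity
  nlinarith
end
end

section
open Complex
open scoped Real
set_option autoImplicit false
noncomputable section

theorem FD_neg (d : ℕ) (hd : Odd d) (n : ℤ) : FD d (-n) = FD d n := by
  have hd4 : d % 4 = 1 ∨ d % 4 = 3 := by rw [Nat.odd_iff] at hd; omega
  have c1 : ∀ x : ZMod 8, ZMod.χ₈ (-x) = ZMod.χ₈ x := by decide
  have c2 : ∀ x : ZMod 8, ZMod.χ₈' (-x) = - ZMod.χ₈' x := by decide
  rw [FD, FD, jacobiSym.neg _ hd]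
  push_cast
  rcases hd4 with h | h
  · rw [if_pos h, if_pos h, c1, ZMod.χ₄_nat_one_mod_four h]; simp
  · rw [if_neg (by omega), if_neg (by omega), c2, ZMod.χ₄_nat_three_mod_four h]; push_cast; ring

theorem FD_nat (d : ℕ) (hd : Odd d) (n : ℕ) : FD d n = (jf d n : ℂ) := by
  rw [jf]
  split_ifs with h
  · rw [FD_odd d n hd h]; push_cast; rfl
  · rw [FD_even d n (Nat.not_odd_iff_even.1 h)]; simp

theorem FD_norm (d : ℕ) (hd : Odd d) (n : ℤ) : ‖FD d n‖ ≤ 1 := by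
  have : ∀ n : ℕ, ‖FD d n‖ ≤ 1 := by
    intro n; rw [FD_nat d hd, Complex.norm_real]; exact jf_abs d n
  obtain ⟨m, rfl | rfl⟩ := n.eq_nat_or_neg
  · exact this m
  · rw [FD_neg d hd]; exact this m

theorem summable_FD (d : ℕ) (hd : Odd d) (δ : ℝ) (hδ : 0 < δ) :
    Summable (fun n : ℤ => FD d n * cexp (-π * (δ : ℂ) * n ^ 2)) := by
  have h := (summable_gauss (δ := (δ : ℂ)) (by simpa using hδ)).norm
  refine Summable.of_norm_bounded h fun n => ?_
  rw [norm_mul]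
  exact mul_le_of_le_one_left (norm_nonneg _) (FD_norm d hd n)

theorem th_two (d : ℕ) (hd : Odd d) (x : ℝ) (hx : 0 < x) :
    ∑' n : ℤ, FD d n * cexp (-π * ((x / (8 * d) : ℝ) : ℂ) * n ^ 2) = 2 * th d x := by
  have hd' : (0 : ℝ) < d := by exact_mod_cast hd.pos
  have hs := summable_FD d hd (x / (8 * d)) (by positivity)
  set f : ℤ → ℂ := fun n => FD d n * cexp (-π * ((x / (8 * d) : ℝ) : ℂ) * n ^ 2) with hf
  have heven : ∀ n, f (-n) = f n := by
    intro n; rw [hf]; dsimp only; rw [FD_neg d hd]; push_cast; ring_nf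
  have h0 : f 0 = 0 := by
    rw [hf]; dsimp only
    have := FD_even d 0 (by simp)
    simp only [Nat.cast_zero] at this
    rw [this]; simp
  have hn : ∀ n : ℕ, f n = ((jf d n * Real.exp (-π * n ^ 2 * x / (8 * d)) : ℝ) : ℂ) := by
    intro n; rw [hf]; dsimp only
    rw [FD_nat d hd]
    push_cast; congr 2; ring
  have hsn : HasSum (fun n : ℕ => f n) (th d x : ℂ) := by
    simp_rw [hn]
    rw [Complex.hasSum_ofReal]
    exact (summable_th d hd.pos x hx).of_norm.hasSum
  have := HasSum.of_nat_of_neg (f := f) hsn (by simp_rw [heven]; exact hsn)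
  rw [this.tsum_eq, h0]; ring

theorem th_fe (d : ℕ) (hd : Odd d) (hsq : Squarefree d) (x : ℝ) (hx : 0 < x) :
    th d x = x ^ (-(1 / 2) : ℝ) * th d (1 / x) := by
  have hd' : (0 : ℝ) < d := by exact_mod_cast hd.pos
  set q : ℕ := 8 * d with hq
  have hq0 : 0 < q := by rw [hq]; have := hd.pos; omega
  have hqr : (0 : ℝ) < q := by exact_mod_cast hq0
  have hqc : (q : ℂ) ≠ 0 := by exact_mod_cast hq0.ne'
  have : NeZero q := ⟨hq0.ne'⟩
  have hqq : (8 * d : ℝ) = q := by rw [hq]; push_cast; rfl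
  have h1 := th_two d hd x hx
  have h2 := th_two d hd (1 / x) (by positivity)
  rw [hqq] at h1 h2
  have hs1 := summable_FD d hd (x / q) (by positivity)
  have hxc : (x : ℂ) ≠ 0 := by exact_mod_cast hx.ne'
  rw [tsum_int_classes _ hs1 q] at h1
  have hδ : 0 < (((x / q : ℝ) : ℂ)).re := by rw [Complex.ofReal_re]; positivity
  have e1 : ∀ r ∈ Finset.range q, ∑' m : ℤ, FD d (r + q * m) * cexp (-π * ((x / q : ℝ) : ℂ) * ((r + q * m : ℤ) : ℂ) ^ 2) =
      1 / (q ^ 2 * ((x / q : ℝ) : ℂ)) ^ (1 / 2 : ℂ) * ∑' k : ℤ, FD d r * cexp (2 * π * I * r * k / q) * cexp (-π * ((1 / x / q : ℝ) : ℂ) * k ^ 2) := by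
    intro r _
    have : ∀ m : ℤ, FD d (r + q * m) = FD d r := fun m => FD_per d r m
    simp_rw [this]
    rw [tsum_mul_left, poisson_class hδ q hq0 r, mul_left_comm, ← tsum_mul_left]
    congr 1
    refine tsum_congr fun k => ?_
    rw [mul_assoc (FD d r), ← Complex.exp_add]
    congr 2
    push_cast
    field_simp
    ring
  rw [Finset.sum_congr rfl e1, ← Finset.mul_sum] at h1
  have hs2 : ∀ r ∈ Finset.range q, Summable (fun k : ℤ => FD d r * cexp (2 * π * I * r * k / q) * cexp (-π * ((1 / x / q : ℝ) : ℂ) * k ^ 2)) := by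
    intro r _
    have h := (summable_gauss (δ := ((1 / x / q : ℝ) : ℂ)) (by rw [Complex.ofReal_re]; positivity)).norm
    refine Summable.of_norm_bounded h fun n => ?_
    rw [norm_mul, norm_mul]
    refine mul_le_of_le_one_left (norm_nonneg _) ?_
    have : ‖cexp (2 * π * I * r * n / q)‖ = 1 := by
      rw [show (2 * π * I * r * n / q : ℂ) = ((2 * π * r * n / q : ℝ) : ℂ) * I by push_cast; ring]
      exact Complex.norm_exp_ofReal_mul_I _
    rw [this, mul_one]; exact FD_norm d hd _
  rw [← Summable.tsum_finsetSum hs2] at h1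
  have hG := FD_gauss d hd hsq
  have e2 : ∀ k : ℤ, ∑ r ∈ Finset.range q, FD d r * cexp (2 * π * I * r * k / q) * cexp (-π * ((1 / x / q : ℝ) : ℂ) * k ^ 2) =
      (√(q : ℝ) : ℂ) * (FD d k * cexp (-π * ((1 / x / q : ℝ) : ℂ) * k ^ 2)) := by
    intro k
    rw [← Finset.sum_mul, hG k, ← hq]; ring
  simp_rw [e2] at h1
  rw [tsum_mul_left, h2] at h1
  have e3 : (q ^ 2 * ((x / q : ℝ) : ℂ)) ^ (1 / 2 : ℂ) = ((√(q : ℝ) * x ^ (1 / 2 : ℝ) : ℝ) : ℂ) := by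
    have : (q ^ 2 * ((x / q : ℝ) : ℂ)) = ((q * x : ℝ) : ℂ) := by push_cast; field_simp
    rw [this, Real.sqrt_eq_rpow, ← Real.mul_rpow (by positivity) hx.le, Complex.ofReal_cpow (by positivity)]
    norm_num
  rw [e3] at h1
  have hsq0 : √(q : ℝ) ≠ 0 := (Real.sqrt_pos.2 hqr).ne'
  have hx2 : x ^ (1 / 2 : ℝ) ≠ 0 := by positivity
  have h4 : (1 / (√(q : ℝ) * x ^ (1 / 2 : ℝ)) * (√(q : ℝ) * (2 * th d (1 / x))) : ℝ) = 2 * th d x := by exact_mod_cast h1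
  rw [Real.rpow_neg hx.le]
  field_simp at h4 ⊢
  linarith
end
end

section
open Complex
open scoped Real
set_option autoImplicit false
noncomputable section

theorem th_cont (d : ℕ) (hd : 0 < d) : ContinuousOn (th d) (Set.Ioi 0) := by
  have hd' : (0 : ℝ) < d := by exact_mod_cast hd
  have key : ∀ a : ℝ, 0 < a → ContinuousOn (th d) (Set.Ici a) := by
    intro a ha
    unfold th
    refine continuousOn_tsum (u := fun n : ℕ => Real.exp (-π * n ^ 2 * (a / (8 * d)))) ?_ (summable_exp_nat _ (by positivity)) ?_
    · intro n; fun_prop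
    · intro n x hx
      have hx : a ≤ x := hx
      rw [norm_mul, Real.norm_eq_abs, Real.norm_of_nonneg (Real.exp_pos _).le]
      refine (mul_le_of_le_one_left (Real.exp_pos _).le (jf_abs d n)).trans ?_
      apply Real.exp_le_exp.2
      rw [show -π * n ^ 2 * x / (8 * d) = -(π * n ^ 2 * (x / (8 * d))) by ring, show -π * n ^ 2 * (a / (8 * d)) = -(π * n ^ 2 * (a / (8 * d))) by ring]
      apply neg_le_neg
      gcongr
  intro x hx
  have hx : 0 < x := hx
  have := (key (x / 2) (by positivity)).continuousAt (Ici_mem_nhds (by linarith : x / 2 < x))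
  exact this.continuousWithinAt

theorem th_decay (d : ℕ) (hd : 0 < d) : ∃ K c : ℝ, 0 < c ∧ ∀ x : ℝ, 1 ≤ x → |th d x| ≤ K * Real.exp (-c * x) := by
  have hd' : (0 : ℝ) < d := by exact_mod_cast hd
  have hs := summable_exp_nat (1 / (16 * d)) (by positivity)
  refine ⟨∑' n : ℕ, Real.exp (-π * n ^ 2 * (1 / (16 * d))), π / (16 * d), by positivity, ?_⟩
  intro x hx
  rw [th, ← Real.norm_eq_abs, ← tsum_mul_right]
  refine tsum_of_norm_bounded (hs.mul_right _).hasSum fun n => ?_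
  rw [norm_mul, Real.norm_eq_abs, Real.norm_of_nonneg (Real.exp_pos _).le, ← Real.exp_add]
  rcases Nat.eq_zero_or_pos n with h | h
  · subst h; simp [jf]; positivity
  · refine (mul_le_of_le_one_left (Real.exp_pos _).le (jf_abs d n)).trans ?_
    apply Real.exp_le_exp.2
    have hn : (1 : ℝ) ≤ n := by exact_mod_cast h
    have hn2 : (1 : ℝ) ≤ (n : ℝ) ^ 2 := one_le_pow₀ hn
    rw [show -π * n ^ 2 * x / (8 * d) = -(π / (16 * d) * (2 * n ^ 2 * x)) by field_simp; ring,
      show -π * n ^ 2 * (1 / (16 * d)) + -(π / (16 * d)) * x = -(π / (16 * d) * (n ^ 2 + x)) by field_simp; ring]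
    apply neg_le_neg
    apply mul_le_mul_of_nonneg_left _ (by positivity)
    nlinarith

theorem th_bigO (d : ℕ) (hd : 0 < d) (r : ℝ) : (fun x => (th d x : ℂ)) =O[Filter.atTop] (fun x : ℝ => x ^ r) := by
  obtain ⟨K, c, hc, h⟩ := th_decay d hd
  have h1 : (fun x => (th d x : ℂ)) =O[Filter.atTop] (fun x : ℝ => Real.exp (-c * x)) := by
    refine Asymptotics.IsBigO.of_bound K ?_
    filter_upwards [Filter.eventually_ge_atTop 1] with x hx
    rw [Complex.norm_real, Real.norm_of_nonneg (Real.exp_pos _).le]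
    exact h x hx
  exact h1.trans (isLittleO_exp_neg_mul_rpow_atTop hc r).isBigO

theorem th_locint (d : ℕ) (hd : 0 < d) : MeasureTheory.LocallyIntegrableOn (fun x => (th d x : ℂ)) (Set.Ioi 0) :=
  ContinuousOn.locallyIntegrableOn (Complex.continuous_ofReal.comp_continuousOn (th_cont d hd)) measurableSet_Ioi

def thPair (d : ℕ) (hd : Odd d) (hsq : Squarefree d) : WeakFEPair ℂ where
  f := fun x => (th d x : ℂ)
  g := fun x => (th d x : ℂ)
  k := 1 / 2
  ε := 1
  f₀ := 0
  g₀ := 0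
  hf_int := th_locint d hd.pos
  hg_int := th_locint d hd.pos
  hk := by norm_num
  hε := one_ne_zero
  h_feq := by
    intro x hx
    have hx : 0 < x := hx
    have h := th_fe d hd hsq (1 / x) (by positivity)
    rw [one_div_one_div, one_div, Real.inv_rpow hx.le, Real.rpow_neg hx.le, inv_inv] at h
    rw [one_div x, h]; simp
  hf_top := by intro r; simpa using th_bigO d hd.pos r
  hg_top := by intro r; simpa using th_bigO d hd.pos r

theorem thPair_strong (d : ℕ) (hd : Odd d) (hsq : Squarefree d) : IsStrongFEPair (thPair d hd hsq) := ⟨rfl, rfl⟩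

def mth (d : ℕ) (u : ℂ) : ℂ := mellin (fun x => (th d x : ℂ)) u

theorem mth_fe (d : ℕ) (hd : Odd d) (hsq : Squarefree d) (u : ℂ) : mth d (1 / 2 - u) = mth d u := by
  have hP := thPair_strong d hd hsq
  have h := (thPair d hd hsq).functional_equation u
  rw [hP.Λ_eq, hP.symm_Λ_eq] at h
  have e1 : (((thPair d hd hsq).k : ℝ) : ℂ) = 1 / 2 := by simp [thPair]
  have e2 : (thPair d hd hsq).ε = 1 := rfl
  rw [e1, e2, one_smul] at h
  exact h

theorem mth_diff (d : ℕ) (hd : Odd d) (hsq : Squarefree d) : Differentiable ℂ (mth d) := by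
  have hP := thPair_strong d hd hsq
  have := hP.differentiable_Λ
  rw [hP.Λ_eq] at this
  exact this

theorem mth_conv (d : ℕ) (hd : Odd d) (hsq : Squarefree d) (u : ℂ) : MellinConvergent (fun x => (th d x : ℂ)) u :=
  ((thPair_strong d hd hsq).hasMellin u).1

theorem HasSum.congr_fun_helper {f g : ℕ → ℂ} {a : ℂ} (h : HasSum f a) (hfg : ∀ n, g n = f n) : HasSum g a := by
  rwa [show g = f from funext hfg]

theorem L_large (d : ℕ) (hd : Odd d) [NeZero (8 * d)] (χ : DirichletCharacter ℂ (8 * d))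
    (hχ : ∀ n : ℕ, χ (n : ZMod (8 * d)) = (jf d n : ℂ)) (s : ℂ) (hs : 1 < s.re) :
    mth d (s / 2) = ((8 * d : ℕ) : ℂ) ^ (s / 2) * Gammaℝ s * χ.LFunction s := by
  have hd' : (0 : ℝ) < d := by exact_mod_cast hd.pos
  have hs0 : s ≠ 0 := by rintro rfl; simp at hs; linarith
  have hq : (0 : ℝ) < 8 * d := by positivity
  set F : ℝ → ℂ := fun t => (th d ((8 * d) * t) : ℂ) with hF
  have h1 : mellin F (s / 2) = ((8 * d : ℝ) : ℂ) ^ (-(s / 2)) • mth d (s / 2) :=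
    mellin_comp_mul_left (fun x => (th d x : ℂ)) (s / 2) hq
  have h2 := hasSum_mellin_pi_mul_sq (ι := ℕ) (a := fun n => (jf d n : ℂ)) (r := fun n => (n : ℝ)) (F := F) (s := s) (by linarith) ?_ ?_
  · rw [DirichletCharacter.LFunction_eq_LSeries χ hs]
    have h3 := h2.tsum_eq
    have h4 : ∑' n : ℕ, Gammaℝ s * (jf d n : ℂ) / ((|(n : ℝ)| : ℝ) : ℂ) ^ s = Gammaℝ s * LSeries (fun n : ℕ => χ (n : ZMod (8 * d))) s := by
      rw [LSeries, ← tsum_mul_left]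
      refine tsum_congr fun n => ?_
      rw [LSeries.term_def₀]
      · rw [hχ, mul_div_assoc, abs_of_nonneg (by positivity), Complex.cpow_neg]; push_cast; rfl
      · rw [hχ]; simp [jf]
    rw [h4, h1] at h3
    rw [mul_assoc, h3, Complex.cpow_neg, smul_eq_mul]
    have : (((8 * d : ℝ)) : ℂ) = ((8 * d : ℕ) : ℂ) := by push_cast; rfl
    rw [this, mul_inv_cancel_left₀]
    rw [Complex.cpow_ne_zero_iff]
    left
    exact_mod_cast (NeZero.ne (8 * d))
  · intro t ht
    have ht : 0 < t := ht
    have h5 := (summable_th d hd.pos (8 * d * t) (by positivity)).of_norm.hasSum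
    rw [← Complex.hasSum_ofReal] at h5
    rw [hF]
    refine HasSum.congr_fun_helper h5 fun n => ?_
    rcases Nat.eq_zero_or_pos n with h | h
    · subst h; simp [jf]
    · have : (n : ℝ) ≠ 0 := by exact_mod_cast h.ne'
      simp only [this, if_false]
      have hdc : (d : ℂ) ≠ 0 := by exact_mod_cast hd.pos.ne'
      push_cast
      congr 2
      field_simp
  · have hz : Summable (fun n : ℕ => 1 / (n : ℝ) ^ s.re) := Real.summable_one_div_nat_rpow.2 hs
    refine Summable.of_nonneg_of_le (fun n => by positivity) (fun n => ?_) hz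
    rw [abs_of_nonneg (by positivity : (0 : ℝ) ≤ n), Complex.norm_real]
    gcongr
    exact jf_abs d n

theorem L_all (d : ℕ) (hd : Odd d) (hsq : Squarefree d) [NeZero (8 * d)] (χ : DirichletCharacter ℂ (8 * d))
    (hχ : ∀ n : ℕ, χ (n : ZMod (8 * d)) = (jf d n : ℂ)) (s : ℂ) :
    χ.LFunction s = ((8 * d : ℕ) : ℂ) ^ (-(s / 2)) * (Gammaℝ s)⁻¹ * mth d (s / 2) := by
  have hq : ((8 * d : ℕ) : ℂ) ≠ 0 := by exact_mod_cast (NeZero.ne (8 * d))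
  have hsum : ∑ j : ZMod (8 * d), χ j = 0 := by
    rw [← sum_range_zmod (8 * d) (fun j => χ j)]
    have := FD_gauss d hd hsq 0
    simp only [Int.cast_zero, mul_zero, zero_div, Complex.exp_zero, mul_one] at this
    have h0 : FD d 0 = 0 := by
      have := FD_even d 0 (by simp)
      simpa using this
    rw [h0, mul_zero] at this
    rw [← this]
    refine Finset.sum_congr rfl fun n _ => ?_
    rw [hχ, FD_nat d hd]
  have hL : Differentiable ℂ χ.LFunction := ZMod.differentiable_LFunction_of_sum_zero hsum
  have hR : Differentiable ℂ (fun s => ((8 * d : ℕ) : ℂ) ^ (-(s / 2)) * (Gammaℝ s)⁻¹ * mth d (s / 2)) := by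
    refine Differentiable.mul (Differentiable.mul ?_ differentiable_Gammaℝ_inv) ?_
    · intro s
      apply DifferentiableAt.const_cpow (by fun_prop) (Or.inl hq)
    · exact (mth_diff d hd hsq).comp (by fun_prop)
  have hLa : AnalyticOnNhd ℂ χ.LFunction Set.univ := fun z _ => hL.analyticAt z
  have hRa : AnalyticOnNhd ℂ (fun s => ((8 * d : ℕ) : ℂ) ^ (-(s / 2)) * (Gammaℝ s)⁻¹ * mth d (s / 2)) Set.univ := fun z _ => hR.analyticAt z
  have := AnalyticOnNhd.eq_of_eventuallyEq hLa hRa (z₀ := 2) ?_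
  · exact congrFun this s
  · have : {z : ℂ | 1 < z.re} ∈ nhds (2 : ℂ) := (isOpen_lt continuous_const Complex.continuous_re).mem_nhds (by simp)
    filter_upwards [this] with z hz
    rw [L_large d hd χ hχ z hz, Complex.cpow_neg]
    have h1 : Gammaℝ z ≠ 0 := Gammaℝ_ne_zero_of_re_pos (by have : 1 < z.re := hz
                                                           linarith)
    have h2 : ((8 * d : ℕ) : ℂ) ^ (z / 2) ≠ 0 := by rw [Complex.cpow_ne_zero_iff]; exact Or.inl hq
    field_simp
end
end

section
open Complex
open scoped Real
set_option autoImplicit false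
noncomputable section

theorem cpow_pi8 (u : ℂ) : ((Real.pi : ℂ) / 8) ^ u = (π:ℂ) ^ u * (8:ℂ) ^ (-u) := by
  have : ((Real.pi : ℂ) / 8) = ((π : ℝ):ℂ) * (((1/8:ℝ):ℝ) : ℂ) := by push_cast; ring
  rw [this, Complex.mul_cpow_ofReal_nonneg Real.pi_pos.le (by norm_num)]
  congr 1
  have : (((1/8:ℝ):ℝ) : ℂ) = (8:ℂ)⁻¹ := by push_cast; ring
  rw [this, Complex.inv_cpow, Complex.cpow_neg]
  rw [show (8:ℂ) = ((8:ℝ):ℂ) by norm_num, Complex.arg_ofReal_of_nonneg (by norm_num)]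
  exact Real.pi_pos.ne

theorem gamma_odd_ne (s : ℂ) (hs : ∀ k : ℕ, s ≠ 2 * k + 1) : Complex.Gamma ((1 - s) / 2) ≠ 0 := by
  apply Complex.Gamma_ne_zero
  intro m hm
  apply hs m
  linear_combination -2 * hm

theorem term_fe (d : ℕ) (hd : Odd d) (hsq : Squarefree d) [NeZero (8 * d)] (χ : DirichletCharacter ℂ (8 * d))
    (hχ : ∀ n : ℕ, χ (n : ZMod (8 * d)) = (jf d n : ℂ)) (s w : ℂ) (hs : ∀ k : ℕ, s ≠ 2 * k + 1) :
    χ.LFunction s * (d : ℂ) ^ (-w) = Xplus s * (χ.LFunction (1 - s) * (d : ℂ) ^ (-(s + w - 1 / 2))) := by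
  rw [L_all d hd hsq χ hχ s, L_all d hd hsq χ hχ (1 - s), show (1 - s) / 2 = 1 / 2 - s / 2 by ring, mth_fe d hd hsq,
    Xplus, Gammaℝ_def, Gammaℝ_def, cpow_pi8]
  have hg := gamma_odd_ne s hs
  rw [show (1 - s) / 2 = 1 / 2 - s / 2 by ring] at *
  have hd0 : (d : ℂ) ≠ 0 := by exact_mod_cast hd.pos.ne'
  have hpi : (π : ℂ) ≠ 0 := by exact_mod_cast Real.pi_pos.ne'
  have h8 : (8 : ℂ) ≠ 0 := by norm_num
  have hq : ∀ u : ℂ, ((8 * d : ℕ) : ℂ) ^ u = (8:ℂ) ^ u * (d:ℂ) ^ u := by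
    intro u
    have := Complex.natCast_mul_natCast_cpow 8 d u
    push_cast at this ⊢
    exact this
  rw [hq, hq]
  have e1 : (π:ℂ) ^ (s - 1/2) = (π:ℂ) ^ (-(1 - s)/2) * (π:ℂ) ^ (s/2) := by
    rw [← Complex.cpow_add _ _ hpi]; congr 1; ring
  have e2 : (π:ℂ) ^ (s/2) * (π:ℂ) ^ (-s/2) = 1 := by
    rw [← Complex.cpow_add _ _ hpi, ← Complex.cpow_zero (π:ℂ)]; congr 1; ring
  have e3 : (8:ℂ) ^ (-(s/2)) = (8:ℂ) ^ (-(s - 1/2)) * (8:ℂ) ^ (-(1/2 - s/2)) := by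
    rw [← Complex.cpow_add _ _ h8]; congr 1; ring
  have e4 : (d:ℂ) ^ (-(s/2)) * (d:ℂ) ^ (-w) = (d:ℂ) ^ (-(1/2 - s/2)) * (d:ℂ) ^ (-(s + w - 1/2)) := by
    rw [← Complex.cpow_add _ _ hd0, ← Complex.cpow_add _ _ hd0]; congr 1; ring
  have hp1 : (π:ℂ) ^ (-(1 - s)/2) ≠ 0 := by rw [Complex.cpow_ne_zero_iff]; exact Or.inl hpi
  have hp2 : (π:ℂ) ^ (-s/2) ≠ 0 := by rw [Complex.cpow_ne_zero_iff]; exact Or.inl hpi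
  have e2' : (π:ℂ) ^ (s/2) = ((π:ℂ) ^ (-s/2))⁻¹ := eq_inv_of_mul_eq_one_left e2
  rw [e1, e2', e3, mul_inv, mul_inv, div_eq_mul_inv _ (Complex.Gamma (s / 2))]
  generalize (Complex.Gamma (s/2))⁻¹ = G at *
  generalize (π:ℂ) ^ (-(1 - s)/2) = P at *
  generalize (π:ℂ) ^ (-s/2) = Q at *
  generalize Complex.Gamma (1/2 - s/2) = G' at *
  generalize (8:ℂ) ^ (-(s - 1/2)) = A at *
  generalize (8:ℂ) ^ (-(1/2 - s/2)) = B at *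
  generalize mth d (s/2) = M at *
  have : A * B * (d:ℂ) ^ (-(s/2)) * (Q⁻¹ * G) * M * (d:ℂ) ^ (-w) = A * B * Q⁻¹ * G * M * ((d:ℂ) ^ (-(s/2)) * (d:ℂ) ^ (-w)) := by ring
  rw [this, e4]
  field_simp

theorem mean_abs (A : ℝ) (hA : 1 / 2 < A) : ∃ C : ℝ, 0 < C ∧ ∀ X : ℕ, 1 ≤ X → ∀ x : ℝ, 1 ≤ x →
    ∑ d ∈ Finset.range (X + 1) with Odd d, |th d x| ≤ C * (X : ℝ) ^ (1 + A / 2) * x ^ (-(A / 2)) := by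
  obtain ⟨C, hC, h⟩ := mean_sq A hA
  refine ⟨2 * (C + 1), by positivity, fun X hX x hx => ?_⟩
  have hX' : (0:ℝ) < X := by exact_mod_cast hX
  have hX1 : (1:ℝ) ≤ X := by exact_mod_cast hX
  have hx' : 0 < x := by linarith
  set S := (Finset.range (X + 1)).filter Odd with hS
  have hcs : (∑ d ∈ S, |th d x|) ^ 2 ≤ S.card * ∑ d ∈ S, |th d x| ^ 2 := sq_sum_le_card_mul_sum_sq
  have hcard : (S.card : ℝ) ≤ 2 * X := by
    have : S.card ≤ X + 1 := (Finset.card_filter_le _ _).trans (by simp)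
    have : (S.card : ℝ) ≤ X + 1 := by exact_mod_cast this
    linarith
  have h2 : ∑ d ∈ S, |th d x| ^ 2 ≤ C * (X:ℝ)^(1+A) * x^(-A) := by
    simpa only [sq_abs] using h X hX x hx
  refine (pow_le_pow_iff_left₀ (Finset.sum_nonneg fun _ _ => abs_nonneg _) (by positivity) two_ne_zero).1 ?_
  calc _ ≤ S.card * ∑ d ∈ S, |th d x| ^ 2 := hcs
    _ ≤ (2 * X) * (C * (X:ℝ)^(1+A) * x^(-A)) := by gcongr
    _ = 2 * C * ((X:ℝ) ^ (1 + A/2))^2 * (x ^ (-(A/2)))^2 := by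
      rw [← Real.rpow_natCast, ← Real.rpow_natCast, ← Real.rpow_mul hX'.le, ← Real.rpow_mul hx'.le]
      rw [show (1 + A/2) * ((2:ℕ):ℝ) = 1 + (1 + A) by push_cast; ring, Real.rpow_add hX' 1 (1 + A), Real.rpow_one]
      rw [show -(A/2) * ((2:ℕ):ℝ) = -A by push_cast; ring]
      ring
    _ ≤ _ := by
      rw [mul_pow, mul_pow]
      gcongr
      nlinarith
end
end

section
open Complex
open scoped Real
set_option autoImplicit false
noncomputable section

def Ith (σ : ℝ) (d : ℕ) : ℝ := ∫ x in Set.Ioi (0:ℝ), |th d x| * x ^ (σ / 2 - 1)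

theorem norm_int (d : ℕ) (s : ℂ) (x : ℝ) (hx : 0 < x) :
    ‖(x : ℂ) ^ (s / 2 - 1) • (th d x : ℂ)‖ = |th d x| * x ^ (s.re / 2 - 1) := by
  rw [norm_smul, Complex.norm_cpow_eq_rpow_re_of_pos hx, Complex.norm_real, Real.norm_eq_abs, mul_comm]
  congr 2
  have : (s / 2).re = s.re / 2 := by
    rw [show s / 2 = s / ((2:ℝ):ℂ) by norm_num, Complex.div_ofReal_re]
  rw [Complex.sub_re, this, Complex.one_re]

theorem Ith_int (d : ℕ) (hd : Odd d) (hsq : Squarefree d) (σ : ℝ) :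
    MeasureTheory.IntegrableOn (fun x => |th d x| * x ^ (σ / 2 - 1)) (Set.Ioi (0:ℝ)) := by
  have h := (mth_conv d hd hsq ((σ : ℂ) / 2)).norm
  refine MeasureTheory.IntegrableOn.congr_fun h (fun x hx => ?_) measurableSet_Ioi
  simpa using norm_int d σ x hx

theorem mth_norm (d : ℕ) (s : ℂ) : ‖mth d (s / 2)‖ ≤ Ith s.re d := by
  rw [mth, mellin, Ith]
  refine (MeasureTheory.norm_integral_le_integral_norm _).trans (le_of_eq ?_)
  exact MeasureTheory.setIntegral_congr_fun measurableSet_Ioi fun x hx => norm_int d s x hx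

theorem Ith_nonneg (σ : ℝ) (d : ℕ) : 0 ≤ Ith σ d :=
  MeasureTheory.setIntegral_nonneg measurableSet_Ioi fun x hx =>
    mul_nonneg (abs_nonneg _) (Real.rpow_nonneg (le_of_lt hx) _)

theorem sum_Ith (σ A : ℝ) (hσ : 1 / 2 ≤ σ) (hA : σ < A) : ∃ C : ℝ, 0 ≤ C ∧ ∀ X : ℕ, 1 ≤ X →
    ∑ d ∈ Finset.range (X + 1) with (Odd d ∧ Squarefree d), Ith σ d ≤ C * (X : ℝ) ^ (1 + A / 2) := by
  obtain ⟨C, hC, h⟩ := mean_abs A (by linarith)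
  set g : ℝ → ℝ := fun x => if x ≤ 1 then x ^ (A / 2 + σ / 2 - 3 / 2) else x ^ (σ / 2 - A / 2 - 1) with hg
  have hgi : MeasureTheory.IntegrableOn g (Set.Ioi 0) := by
    rw [← Set.Ioc_union_Ioi_eq_Ioi (zero_le_one' ℝ)]
    refine MeasureTheory.IntegrableOn.union ?_ ?_
    · have : MeasureTheory.IntegrableOn (fun x : ℝ => x ^ (A / 2 + σ / 2 - 3 / 2)) (Set.Ioc 0 1) := by
        rw [← intervalIntegrable_iff_integrableOn_Ioc_of_le zero_le_one]
        exact intervalIntegral.intervalIntegrable_rpow' (by linarith)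
      exact this.congr_fun (fun x hx => by simp [hg, hx.2]) measurableSet_Ioc
    · have : MeasureTheory.IntegrableOn (fun x : ℝ => x ^ (σ / 2 - A / 2 - 1)) (Set.Ioi 1) :=
        integrableOn_Ioi_rpow_of_lt (by linarith) one_pos
      exact this.congr_fun (fun x hx => by simp [hg, not_le.2 (Set.mem_Ioi.1 hx)]) measurableSet_Ioi
  have hg0 : 0 ≤ ∫ x in Set.Ioi 0, g x := by
    refine MeasureTheory.setIntegral_nonneg measurableSet_Ioi fun x hx => ?_
    have hx : 0 < x := hx
    simp only [hg]; split_ifs <;> positivity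
  refine ⟨C * ∫ x in Set.Ioi 0, g x, by positivity, fun X hX => ?_⟩
  unfold Ith
  rw [← MeasureTheory.integral_finsetSum _ (fun d hd => Ith_int d (Finset.mem_filter.1 hd).2.1 (Finset.mem_filter.1 hd).2.2 σ)]
  rw [show C * (∫ x in Set.Ioi 0, g x) * (X : ℝ) ^ (1 + A / 2) = (C * (X : ℝ) ^ (1 + A / 2)) * ∫ x in Set.Ioi 0, g x by ring,
    ← MeasureTheory.integral_const_mul]
  refine MeasureTheory.setIntegral_mono_on ?_ (hgi.const_mul _) measurableSet_Ioi fun x hx => ?_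
  · exact MeasureTheory.integrable_finsetSum _ (fun d hd => Ith_int d (Finset.mem_filter.1 hd).2.1 (Finset.mem_filter.1 hd).2.2 σ)
  have hx : 0 < x := hx
  rw [← Finset.sum_mul]
  have hsub : ∀ y : ℝ, ∑ d ∈ Finset.range (X + 1) with (Odd d ∧ Squarefree d), |th d y| ≤
      ∑ d ∈ Finset.range (X + 1) with Odd d, |th d y| := fun y =>
    Finset.sum_le_sum_of_subset_of_nonneg (fun d hd => by
      simp only [Finset.mem_filter] at hd ⊢; exact ⟨hd.1, hd.2.1⟩) (fun _ _ _ => abs_nonneg _)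
  by_cases h1 : x ≤ 1
  · have hx1 : 1 ≤ 1 / x := by rw [le_div_iff₀ hx]; linarith
    have h2 := (hsub (1 / x)).trans (h X hX (1 / x) hx1)
    have h3 : ∑ d ∈ Finset.range (X + 1) with (Odd d ∧ Squarefree d), |th d x| =
        x ^ (-(1/2):ℝ) * ∑ d ∈ Finset.range (X + 1) with (Odd d ∧ Squarefree d), |th d (1 / x)| := by
      rw [Finset.mul_sum]
      refine Finset.sum_congr rfl fun d hd => ?_
      have hd := (Finset.mem_filter.1 hd).2
      rw [th_fe d hd.1 hd.2 x hx, abs_mul, abs_of_nonneg (by positivity : 0 ≤ x ^ (-(1/2):ℝ))]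
    rw [h3]
    simp only [hg, if_pos h1]
    calc _ ≤ x ^ (-(1/2):ℝ) * (C * (X : ℝ) ^ (1 + A / 2) * (1 / x) ^ (-(A / 2))) * x ^ (σ / 2 - 1) := by gcongr
      _ = C * (X : ℝ) ^ (1 + A / 2) * (x ^ (-(1/2):ℝ) * x ^ (A / 2) * x ^ (σ / 2 - 1)) := by
        rw [one_div x, Real.inv_rpow hx.le, Real.rpow_neg hx.le (A / 2), inv_inv]; ring
      _ = _ := by
        rw [← Real.rpow_add hx, ← Real.rpow_add hx]; congr 2; ring
  · have hx1 : 1 ≤ x := (not_le.1 h1).le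
    have h2 := (hsub x).trans (h X hX x hx1)
    simp only [hg, if_neg h1]
    calc _ ≤ (C * (X : ℝ) ^ (1 + A / 2) * x ^ (-(A / 2))) * x ^ (σ / 2 - 1) := by gcongr
      _ = _ := by
        rw [mul_assoc, ← Real.rpow_add hx]; congr 2; ring

theorem Ith_summable (σ v : ℝ) (hσ : 1 / 2 ≤ σ) (hv : 1 < v) :
    Summable (fun d : ℕ => if Odd d ∧ Squarefree d then Ith σ d * (d : ℝ) ^ (-(v + σ / 2)) else 0) := by
  obtain ⟨C, hC, h⟩ := sum_Ith σ (σ + (v - 1)) hσ (by linarith)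
  set f : ℕ → ℂ := fun d => if Odd d ∧ Squarefree d then (Ith σ d : ℂ) else 0 with hf
  have hn : ∀ d, ‖f d‖ = if Odd d ∧ Squarefree d then Ith σ d else 0 := by
    intro d
    simp only [hf]
    split_ifs
    · rw [Complex.norm_real, Real.norm_of_nonneg (Ith_nonneg σ d)]
    · simp
  have key : LSeriesSummable f ((v + σ / 2 : ℝ) : ℂ) := by
    refine LSeriesSummable_of_sum_norm_bigO (r := 1 + (σ + (v - 1)) / 2) ?_ (by linarith) (by rw [Complex.ofReal_re]; linarith)
    refine Asymptotics.IsBigO.of_bound C ?_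
    filter_upwards [Filter.eventually_ge_atTop 1] with X hX
    rw [Real.norm_of_nonneg (Finset.sum_nonneg fun _ _ => norm_nonneg _), Real.norm_of_nonneg (by positivity)]
    refine le_trans ?_ (h X hX)
    simp only [hn]
    rw [Finset.sum_filter]
    refine Finset.sum_le_sum_of_subset_of_nonneg (fun d hd => ?_) (fun d _ _ => ?_)
    · simp only [Finset.mem_Icc, Finset.mem_range] at hd ⊢; omega
    · split_ifs
      · exact Ith_nonneg σ d
      · exact le_rfl
  have := key.norm
  refine this.congr fun d => ?_
  rw [LSeries.norm_term_eq]
  rcases Nat.eq_zero_or_pos d with h0 | h0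
  · subst h0; simp
  · rw [if_neg h0.ne', hn, Complex.ofReal_re]
    split_ifs
    · rw [Real.rpow_neg (by positivity), div_eq_mul_inv]
    · simp

theorem L_summable (χ : (d : ℕ) → DirichletCharacter ℂ (8 * d))
    (hχ : ∀ d : ℕ, Odd d → Squarefree d → ∀ n : ℕ, χ d (n : ZMod (8 * d)) = (jf d n : ℂ))
    (s w : ℂ) (hs : 1 / 2 ≤ s.re) (hw : 1 < w.re) (F : ℕ → ℂ)
    (hF : ∀ d : ℕ, Odd d ∧ Squarefree d → ∀ _ : NeZero (8 * d), F d = (χ d).LFunction s * (d : ℂ) ^ (-w))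
    (hF0 : ∀ d : ℕ, ¬ (Odd d ∧ Squarefree d) → F d = 0) :
    Summable (fun d : ℕ => ‖F d‖) := by
  have h := (Ith_summable s.re w.re hs hw).mul_left ((8:ℝ) ^ (-(s.re / 2)) * ‖(Gammaℝ s)⁻¹‖)
  refine Summable.of_nonneg_of_le (fun _ => norm_nonneg _) (fun d => ?_) h
  split_ifs with hd
  · have hd0 : 0 < d := hd.1.pos
    have hne : NeZero (8 * d) := NeZero.of_pos (by positivity)
    rw [hF d hd hne]
    have hd' : (0:ℝ) < d := by exact_mod_cast hd0
    rw [L_all d hd.1 hd.2 (χ d) (hχ d hd.1 hd.2) s, norm_mul, norm_mul, norm_mul,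
      Complex.norm_natCast_cpow_of_pos (by positivity), Complex.norm_natCast_cpow_of_pos hd0]
    have e : (-(s / 2)).re = -(s.re / 2) := by
      rw [show s / 2 = s / ((2:ℝ):ℂ) by norm_num, Complex.neg_re, Complex.div_ofReal_re]
    rw [e, Complex.neg_re]
    push_cast
    rw [Real.mul_rpow (by norm_num) hd'.le]
    have hm := mth_norm d s
    calc _ ≤ 8 ^ (-(s.re / 2)) * (d:ℝ) ^ (-(s.re / 2)) * ‖(Gammaℝ s)⁻¹‖ * Ith s.re d * (d:ℝ) ^ (-w.re) := by gcongr
      _ = _ := by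
        rw [show -(w.re + s.re / 2) = -(s.re / 2) + -w.re by ring, Real.rpow_add hd']; ring
  · simp [hF0 d hd]

theorem Xplus_ne (s : ℂ) (hs : ∀ k : ℕ, s ≠ 2 * k + 1) (h : 0 < s.re) : Xplus s ≠ 0 := by
  unfold Xplus
  refine div_ne_zero (mul_ne_zero ?_ (gamma_odd_ne s hs)) (Complex.Gamma_ne_zero_of_re_pos ?_)
  · rw [Complex.cpow_ne_zero_iff]; left
    exact div_ne_zero (by exact_mod_cast Real.pi_pos.ne') (by norm_num)
  · rw [show s / 2 = s / ((2:ℝ):ℂ) by norm_num, Complex.div_ofReal_re]; positivity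

end
end

/-- the functional equation `A(s,w) = X₊(s) A(1-s, s+w-1/2)` for the double
Dirichlet series `A(s,w) = Σ*_{d odd} L(s,χ_{8d}) d^{-w}`, valid for
`Re w > max(1, 3/2 - Re s)` and `s` not an odd positive integer. -/
theorem statement11
    (χ : (d : ℕ) → DirichletCharacter ℂ (8 * d))
    (hχ : ∀ d : ℕ, Odd d → Squarefree d →
      (∀ n : ℕ, Odd n → χ d (n : ZMod (8 * d)) = ((jacobiSym (8 * d) n : ℤ) : ℂ)) ∧
      (∀ n : ℕ, Even n → χ d (n : ZMod (8 * d)) = 0))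
    (s : ℂ) (hs : ∀ k : ℕ, s ≠ 2 * k + 1)
    (w : ℂ) (hw : max 1 (3 / 2 - s.re) < w.re) :
    Summable (fun d : ℕ => ‖(if h : Odd d ∧ Squarefree d then
        haveI : NeZero (8 * d) := ⟨by rcases h.1 with ⟨k, rfl⟩; omega⟩
        (χ d).LFunction s * (d : ℂ) ^ (-w) else 0)‖) ∧
    Summable (fun d : ℕ => ‖(if h : Odd d ∧ Squarefree d then
        haveI : NeZero (8 * d) := ⟨by rcases h.1 with ⟨k, rfl⟩; omega⟩
        (χ d).LFunction (1 - s) * (d : ℂ) ^ (-(s + w - 1 / 2)) else 0)‖) ∧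
    (∑' d : ℕ, if h : Odd d ∧ Squarefree d then
        haveI : NeZero (8 * d) := ⟨by rcases h.1 with ⟨k, rfl⟩; omega⟩
        (χ d).LFunction s * (d : ℂ) ^ (-w) else 0) =
      Xplus s *
      ∑' d : ℕ, if h : Odd d ∧ Squarefree d then
        haveI : NeZero (8 * d) := ⟨by rcases h.1 with ⟨k, rfl⟩; omega⟩
        (χ d).LFunction (1 - s) * (d : ℂ) ^ (-(s + w - 1 / 2)) else 0 := by
  have hχ' : ∀ d : ℕ, Odd d → Squarefree d → ∀ n : ℕ, χ d (n : ZMod (8 * d)) = (jf d n : ℂ) := by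
    intro d hd hsq n
    unfold jf
    split_ifs with hn
    · rw [(hχ d hd hsq).1 n hn]; push_cast; rfl
    · rw [(hχ d hd hsq).2 n (Nat.not_odd_iff_even.1 hn)]; simp
  have hw1 : 1 < w.re := (le_max_left _ _).trans_lt hw
  have hw2 : 3 / 2 - s.re < w.re := (le_max_right _ _).trans_lt hw
  have hterm : ∀ d : ℕ, (if h : Odd d ∧ Squarefree d then
        haveI : NeZero (8 * d) := ⟨by rcases h.1 with ⟨k, rfl⟩; omega⟩
        (χ d).LFunction s * (d : ℂ) ^ (-w) else 0) = Xplus s * (if h : Odd d ∧ Squarefree d then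
        haveI : NeZero (8 * d) := ⟨by rcases h.1 with ⟨k, rfl⟩; omega⟩
        (χ d).LFunction (1 - s) * (d : ℂ) ^ (-(s + w - 1 / 2)) else 0) := by
    intro d
    split_ifs with hd
    · haveI : NeZero (8 * d) := ⟨by rcases hd.1 with ⟨k, rfl⟩; omega⟩
      exact term_fe d hd.1 hd.2 (χ d) (hχ' d hd.1 hd.2) s w hs
    · simp
  have hT : (∑' d : ℕ, if h : Odd d ∧ Squarefree d then
        haveI : NeZero (8 * d) := ⟨by rcases h.1 with ⟨k, rfl⟩; omega⟩
        (χ d).LFunction s * (d : ℂ) ^ (-w) else 0) =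
      Xplus s *
      ∑' d : ℕ, if h : Odd d ∧ Squarefree d then
        haveI : NeZero (8 * d) := ⟨by rcases h.1 with ⟨k, rfl⟩; omega⟩
        (χ d).LFunction (1 - s) * (d : ℂ) ^ (-(s + w - 1 / 2)) else 0 := by
    rw [← tsum_mul_left]
    exact tsum_congr hterm
  rcases le_or_gt (1 / 2) s.re with h | h
  · have h1 : Summable (fun d : ℕ => ‖(if h : Odd d ∧ Squarefree d then
        haveI : NeZero (8 * d) := ⟨by rcases h.1 with ⟨k, rfl⟩; omega⟩
        (χ d).LFunction s * (d : ℂ) ^ (-w) else 0)‖) := L_summable χ hχ' s w h hw1 _ (fun d hd _ => dif_pos hd) (fun d hd => dif_neg hd)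
    refine ⟨h1, ?_, hT⟩
    have hX := Xplus_ne s hs (by linarith)
    refine (h1.mul_left ‖Xplus s‖⁻¹).congr fun d => ?_
    rw [hterm d, norm_mul, inv_mul_cancel_left₀ (norm_ne_zero_iff.2 hX)]
  · have h2 : Summable (fun d : ℕ => ‖(if h : Odd d ∧ Squarefree d then
        haveI : NeZero (8 * d) := ⟨by rcases h.1 with ⟨k, rfl⟩; omega⟩
        (χ d).LFunction (1 - s) * (d : ℂ) ^ (-(s + w - 1 / 2)) else 0)‖) := L_summable χ hχ' (1 - s) (s + w - 1 / 2) (by simp; linarith) (by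
      have : (1 / 2 : ℂ).re = 1 / 2 := by norm_num
      rw [Complex.sub_re, Complex.add_re, this]; linarith) _ (fun d hd _ => dif_pos hd) (fun d hd => dif_neg hd)
    refine ⟨?_, h2, hT⟩
    refine (h2.mul_left ‖Xplus s‖).congr fun d => ?_
    rw [hterm d, norm_mul]
end
end

section
/- Let s, w ∈ ℂ with Re s > 1 and Re w > 1. Then both series below converge absolutely and Σ_{d odd squarefree ≥ 1} L(s,χ_{8d})·d^{−w} = (1/ζ(2w)) · Σ_{n odd ≥ 1} χ₈(n) · L(w, χ⁽⁴ⁿ⁾) · a_{2w}(4n) · n^{−s}. -/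
open Complex

noncomputable section

/-- `a_t(m) = ∏_{p | m} (1 - p^{-t})^{-1}`. -/
def aF (t : ℂ) (m : ℕ) : ℂ := ∏ p ∈ m.primeFactors, (1 - (p : ℂ) ^ (-t))⁻¹

lemma sqfree_sum {N : ℕ} [NeZero N] (ψ : DirichletCharacter ℂ N) (hψ : ψ ^ 2 = 1)
    (w : ℂ) (hw : 1 < w.re) :
    ψ.LFunction w * aF (2 * w) N =
      riemannZeta (2 * w) * ∑' d : ℕ, if Squarefree d then ψ d * (d : ℂ) ^ (-w) else 0 := by
  classical
  have hw0 : w ≠ 0 := by rintro rfl; norm_num at hw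
  have h2w : 1 < (2 * w).re := by simp; linarith
  set f : ℕ → ℂ := fun d => if Squarefree d then ψ d * (d : ℂ) ^ (-w) else 0 with hf
  have hle : ∀ p : ℕ, p.Prime → ‖ψ p * (p : ℂ) ^ (-w)‖ < 1 := by
    intro p hp
    rw [norm_mul]
    have h1 : ‖ψ p‖ ≤ 1 := ψ.norm_le_one _
    have h2 : ‖(p : ℂ) ^ (-w)‖ < 1 := by
      rw [Complex.norm_natCast_cpow_of_pos hp.pos]
      apply Real.rpow_lt_one_of_one_lt_of_neg
      · exact_mod_cast hp.one_lt
      · simp; linarith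
    nlinarith [norm_nonneg (ψ p), norm_nonneg ((p : ℂ) ^ (-w))]
  have hsum : Summable (‖f ·‖) := by
    refine Summable.of_nonneg_of_le (fun _ => norm_nonneg _) (fun d => ?_)
      (summable_riemannZetaSummand hw)
    simp only [hf]
    split_ifs
    · rw [norm_mul]
      exact mul_le_of_le_one_left (norm_nonneg _) (ψ.norm_le_one _)
    · simp
  have hf0 : f 0 = 0 := by simp [hf]
  have hf1 : f 1 = 1 := by simp [hf]
  have hmul : ∀ {m n : ℕ}, Nat.Coprime m n → f (m * n) = f m * f n := by
    intro m n hmn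
    simp only [hf, Nat.squarefree_mul hmn]
    by_cases h1 : Squarefree m <;> by_cases h2 : Squarefree n <;> simp [h1, h2]
    rw [Complex.natCast_mul_natCast_cpow]
    ring
  have E1 := EulerProduct.eulerProduct_hasProd hf1 hmul hsum hf0
  have E2 := DirichletCharacter.LSeries_eulerProduct_hasProd (1 : DirichletCharacter ℂ N) h2w
  have E3 := DirichletCharacter.LSeries_eulerProduct_hasProd ψ hw
  have key := (E1.mul E2).unique (a₂ := LSeries (fun n : ℕ => ψ n) w) (by
    convert E3 using 2 with p
    have hp := p.2
    have e1 : ∑' e, f ((p : ℕ) ^ e) = 1 + ψ p * (p : ℂ) ^ (-w) := by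
      rw [tsum_eq_sum (s := Finset.range 2)]
      · simp [Finset.sum_range_succ, hf1]
        simp [hf, hp.prime.squarefree]
      · intro e he
        simp only [Finset.mem_range, not_lt] at he
        simp only [hf]
        rw [if_neg]
        rw [Nat.squarefree_pow_iff hp.ne_one (by omega)]
        omega
    have e2 : (1 : DirichletCharacter ℂ N) p * (p : ℂ) ^ (-(2 * w))
        = (ψ p * (p : ℂ) ^ (-w)) ^ 2 := by
      rw [← hψ, MulChar.pow_apply' _ two_ne_zero, mul_pow]
      congr 1
      rw [← Complex.cpow_nat_mul]
      congr 1
      push_cast; ring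
    rw [e1, e2]
    have hx := hle p hp
    generalize ψ p * (p : ℂ) ^ (-w) = x at hx
    have n1 : 1 - x ≠ 0 := by
      intro h
      rw [sub_eq_zero] at h
      simp [← h] at hx
    have n2 : 1 + x ≠ 0 := by
      intro h
      have : x = -1 := by linear_combination h
      simp [this] at hx
    have : 1 - x ^ 2 = (1 - x) * (1 + x) := by ring
    rw [this]
    field_simp)
  have hT := DirichletCharacter.LFunctionTrivChar_eq_mul_riemannZeta (N := N) (s := 2 * w)
    (by rintro h; rw [h] at h2w; simp at h2w)
  rw [DirichletCharacter.LFunctionTrivChar, DirichletCharacter.LFunction_eq_LSeries _ h2w] at hT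
  rw [DirichletCharacter.LFunction_eq_LSeries _ hw, ← key, hT, aF, Finset.prod_inv_distrib]
  have hP : (∏ p ∈ N.primeFactors, (1 - (p : ℂ) ^ (-(2 * w)))) ≠ 0 := by
    rw [Finset.prod_ne_zero_iff]
    intro p hp h
    have hp := Nat.prime_of_mem_primeFactors hp
    have h2 : ‖(p : ℂ) ^ (-(2 * w))‖ < 1 := by
      rw [Complex.norm_natCast_cpow_of_pos hp.pos]
      apply Real.rpow_lt_one_of_one_lt_of_neg
      · exact_mod_cast hp.one_lt
      · simp; linarith
    rw [sub_eq_zero] at h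
    simp [← h] at h2
  field_simp

def FF (s w : ℂ) (d n : ℕ) : ℂ := if Odd d ∧ Squarefree d ∧ Odd n then
  ((ZMod.χ₈ (n : ZMod 8) : ℤ) : ℂ) * ((jacobiSym (d : ℤ) n : ℤ) : ℂ)
    * (d : ℂ) ^ (-w) * (n : ℂ) ^ (-s) else 0

lemma jac_norm (a : ℤ) (n : ℕ) : ‖((jacobiSym a n : ℤ) : ℂ)‖ ≤ 1 := by
  rcases jacobiSym.trichotomy a n with h | h | h <;> simp [h]

lemma FF_summable (s w : ℂ) (hs : 1 < s.re) (hw : 1 < w.re) :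
    Summable (fun x : ℕ × ℕ => FF s w x.1 x.2) := by
  have h := (summable_riemannZetaSummand hw).mul_of_nonneg (summable_riemannZetaSummand hs)
    (fun _ => norm_nonneg _) (fun _ => norm_nonneg _)
  refine Summable.of_norm_bounded h ?_
  rintro ⟨d, n⟩
  simp only [FF]
  split_ifs with hh
  · rw [norm_mul, norm_mul, norm_mul, ← jacobiSym.at_two hh.2.2]
    have h1 := jac_norm 2 n
    have h2 := jac_norm d n
    have h3 := mul_le_one₀ h1 (norm_nonneg _) h2
    simp only [riemannZetaSummandHom, MonoidWithZeroHom.coe_mk, ZeroHom.coe_mk]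
    gcongr
    exact mul_le_of_le_one_left (norm_nonneg _) h3
  · simp; positivity

/-- expansion of the double Dirichlet series
`A(s,w) = Σ*_{d odd} L(s,χ_{8d}) d^{-w}` as
`ζ(2w)^{-1} Σ_{n odd} χ₈(n) L(w, (·/4n)) a_{2w}(4n) n^{-s}` for `Re s > 1`, `Re w > 1`. -/
theorem statement12
    (χ : (d : ℕ) → DirichletCharacter ℂ (8 * d))
    (hχ : ∀ d : ℕ, Odd d → Squarefree d →
      (∀ n : ℕ, Odd n → χ d (n : ZMod (8 * d)) = ((jacobiSym (8 * d) n : ℤ) : ℂ)) ∧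
      (∀ n : ℕ, Even n → χ d (n : ZMod (8 * d)) = 0))
    (ξ : (n : ℕ) → DirichletCharacter ℂ (4 * n))
    (hξ : ∀ n : ℕ, Odd n →
      (∀ m : ℕ, Odd m → ξ n (m : ZMod (4 * n)) = ((jacobiSym (m : ℤ) n : ℤ) : ℂ)) ∧
      (∀ m : ℕ, Even m → ξ n (m : ZMod (4 * n)) = 0))
    (s w : ℂ) (hs : 1 < s.re) (hw : 1 < w.re) :
    Summable (fun d : ℕ => ‖(if h : Odd d ∧ Squarefree d then
        haveI : NeZero (8 * d) := ⟨by rcases h.1 with ⟨k, rfl⟩; omega⟩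
        (χ d).LFunction s * (d : ℂ) ^ (-w) else 0)‖) ∧
    Summable (fun n : ℕ => ‖(if h : Odd n then
        haveI : NeZero (4 * n) := ⟨by rcases h with ⟨k, rfl⟩; omega⟩
        ((ZMod.χ₈ (n : ZMod 8) : ℤ) : ℂ) * (ξ n).LFunction w * aF (2 * w) (4 * n) *
          (n : ℂ) ^ (-s) else 0)‖) ∧
    (∑' d : ℕ, if h : Odd d ∧ Squarefree d then
        haveI : NeZero (8 * d) := ⟨by rcases h.1 with ⟨k, rfl⟩; omega⟩
        (χ d).LFunction s * (d : ℂ) ^ (-w) else 0) =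
      (riemannZeta (2 * w))⁻¹ *
      ∑' n : ℕ, if h : Odd n then
        haveI : NeZero (4 * n) := ⟨by rcases h with ⟨k, rfl⟩; omega⟩
        ((ZMod.χ₈ (n : ZMod 8) : ℤ) : ℂ) * (ξ n).LFunction w * aF (2 * w) (4 * n) *
          (n : ℂ) ^ (-s) else 0 := by
  have hF := FF_summable s w hs hw
  have A : ∀ d : ℕ, (if h : Odd d ∧ Squarefree d then
        haveI : NeZero (8 * d) := ⟨by rcases h.1 with ⟨k, rfl⟩; omega⟩
        (χ d).LFunction s * (d : ℂ) ^ (-w) else 0) = ∑' n, FF s w d n := by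
    intro d
    split_ifs with h
    · haveI : NeZero (8 * d) := ⟨by rcases h.1 with ⟨k, rfl⟩; omega⟩
      obtain ⟨h1, h2⟩ := hχ d h.1 h.2
      rw [DirichletCharacter.LFunction_eq_LSeries _ hs, LSeries, ← tsum_mul_right]
      refine tsum_congr fun n => ?_
      rw [LSeries.term_def₀ (h2 0 (by simp))]
      rcases Nat.even_or_odd n with hn | hn
      · rw [h2 n hn, FF, if_neg]
        · ring
        · intro h3
          exact (Nat.not_odd_iff_even.mpr hn) h3.2.2
      · rw [h1 n hn, FF, if_pos ⟨h.1, h.2, hn⟩, ← jacobiSym.at_two hn]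
        have : jacobiSym (8 * d) n = jacobiSym 2 n * jacobiSym d n := by
          rw [jacobiSym.mul_left]
          congr 1
          rw [show (8 : ℤ) = 2 ^ 3 by norm_num, jacobiSym.pow_left]
          rcases jacobiSym.trichotomy 2 n with h | h | h <;> simp [h]
        rw [this]
        push_cast
        ring
    · rw [← tsum_zero (α := ℂ) (β := ℕ)]
      refine tsum_congr fun n => ?_
      rw [FF, if_neg]
      tauto
  have B : ∀ n : ℕ, (if h : Odd n then
        haveI : NeZero (4 * n) := ⟨by rcases h with ⟨k, rfl⟩; omega⟩
        ((ZMod.χ₈ (n : ZMod 8) : ℤ) : ℂ) * (ξ n).LFunction w * aF (2 * w) (4 * n) *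
          (n : ℂ) ^ (-s) else 0) = riemannZeta (2 * w) * ∑' d, FF s w d n := by
    intro n
    split_ifs with h
    · haveI : NeZero (4 * n) := ⟨by rcases h with ⟨k, rfl⟩; omega⟩
      obtain ⟨h1, h2⟩ := hξ n h
      have hsq : ξ n ^ 2 = 1 := by
        ext u
        obtain ⟨m, hm⟩ := ZMod.natCast_zmod_surjective (u : ZMod (4 * n))
        have hne : ξ n u ≠ 0 := (u.isUnit.map (ξ n)).ne_zero
        rw [MulChar.pow_apply' _ two_ne_zero, MulChar.one_apply_coe]
        rw [← hm] at hne ⊢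
        rcases Nat.even_or_odd m with hm' | hm'
        · exact absurd (h2 m hm') hne
        · rw [h1 m hm'] at hne ⊢
          rcases jacobiSym.trichotomy m n with h | h | h <;> simp [h] at hne ⊢
      have := sqfree_sum (ξ n) hsq w hw
      rw [mul_assoc (_ : ℂ) _ (aF _ _), this, mul_left_comm, mul_assoc, ← tsum_mul_left,
        ← tsum_mul_right]
      congr 1
      refine tsum_congr fun d => ?_
      rw [FF]
      by_cases hd : Squarefree d
      · rcases Nat.even_or_odd d with hd' | hd'
        · rw [h2 d hd', if_neg (c := _ ∧ _)]
          · simp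
          · intro h3
            exact (Nat.not_odd_iff_even.mpr hd') h3.1
        · rw [h1 d hd', if_pos hd, if_pos ⟨hd', hd, h⟩]
          ring
      · simp [hd]
    · have : ∀ d, FF s w d n = 0 := fun d => by
        rw [FF, if_neg]
        tauto
      simp [this]
  have hz : riemannZeta (2 * w) ≠ 0 :=
    riemannZeta_ne_zero_of_one_lt_re (by simp; linarith)
  simp only [A, B]
  refine ⟨hF.prod.norm, (hF.prod_symm.prod.mul_left _).norm, ?_⟩
  rw [tsum_mul_left, inv_mul_cancel_left₀ hz]
  exact Summable.tsum_comm (f := fun n d => FF s w d n) hF.prod_symm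
end
end
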